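/- arXiv:2108.04765 — 2 statements merged into one kernel-verified Lean document; each statement's English description precedes it below -/
import Mathlib

section
/- (Conversion to higher-order divergence form.) Let 𝒮 ⊂ Λ be a lattice basis, let p, q ∈ ℕ with q + 1 − p > d, let α ∈ ℝ, and let f⁽⁰⁾ : Λ → ℝ^N satisfy |f⁽⁰⁾(ℓ)| ≤ C_f⟨ℓ⟩^{−q}(log⟨ℓ⟩)^α for all ℓ ∈ Λ, with vanishing moments ∑_{ℓ∈Λ} f⁽⁰⁾(ℓ) ⊗ ℓ^{⊗j} = 0 for j = 0,…,p−1 (these sums converge absolutely). Then there exist tensor fields f⁽ᵏ⁾ : Λ → ℝ^N ⊗ (ℝ^𝒮)^{⊗k} for 1 ≤ k ≤ p and a constant C independent of f⁽⁰⁾ such that for each 1 ≤ k ≤ p: (sym f⁽ᵏ⁻¹⁾)(ℓ) = ∑_{σ∈𝒮} (f⁽ᵏ⁾_{·,σ}(ℓ−σ) − f⁽ᵏ⁾_{·,σ}(ℓ)) for all ℓ ∈ Λ, where f⁽ᵏ⁾_{·,σ} denotes the slice of f⁽ᵏ⁾ with last 𝒮-index equal to σ, and |f⁽ᵏ⁾(ℓ)|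 ≤ C·C_f⟨ℓ⟩^{−q+k}(log⟨ℓ⟩)^α for all ℓ ∈ Λ. -/
noncomputable section

open scoped BigOperators
open MeasureTheory Filter Topology

namespace Defect

abbrev Vec (n : ℕ) : Type := Fin n → ℝ

/-- Euclidean norm of a vector in `ℝ^n`. -/
def enorm {n : ℕ} (v : Vec n) : ℝ := Real.sqrt (∑ i, (v i) ^ 2)

/-- `⟨x⟩ := |x| + 2`. -/
def ang {n : ℕ} (v : Vec n) : ℝ := enorm v + 2

def dotV {n : ℕ} (x y : Vec n) : ℝ := ∑ i, x i * y i

/-- Matrix-vector product for a plain `Fin N → Fin N → ℝ` matrix. -/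
def mulV {N : ℕ} (M : Fin N → Fin N → ℝ) (v : Vec N) : Vec N := fun i => ∑ j, M i j * v j

/-- Euclidean (Frobenius) norm of an `N × N` array. -/
def mnorm {N : ℕ} (M : Fin N → Fin N → ℝ) : ℝ := Real.sqrt (∑ i, ∑ j, (M i j) ^ 2)

/-- The lattice point `A z` for `z ∈ ℤ^d`. -/
def latticePt (d : ℕ) (A : Matrix (Fin d) (Fin d) ℝ) (z : Fin d → ℤ) : Vec d :=
  fun i => ∑ j, A i j * (z j : ℝ)

/-- The Bravais lattice `Λ = A ℤ^d`. -/
def Lattice (d : ℕ) (A : Matrix (Fin d) (Fin d) ℝ) : Set (Vec d) :=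
  Set.range (latticePt d A)

/-- First-order finite difference `D_ρ u (ℓ) = u(ℓ+ρ) - u(ℓ)`. -/
def D1 {d : ℕ} {M : Type} [AddCommGroup M] (ρ : Vec d) (u : Vec d → M) (ℓ : Vec d) : M :=
  u (ℓ + ρ) - u ℓ

/-- Iterated finite difference `D_{ρ₁} ⋯ D_{ρ_j} u (ℓ)` (closed form). -/
def Dmulti {d : ℕ} {M : Type} [AddCommGroup M] [Module ℝ M] {j : ℕ}
    (ρs : Fin j → Vec d) (u : Vec d → M) (ℓ : Vec d) : M :=
  ∑ S : Finset (Fin j), ((-1 : ℝ) ^ (j - S.card)) • u (ℓ + ∑ i ∈ S, ρs i)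

/-- `|Du(ℓ)|²`, the squared Euclidean norm of the stencil of first differences. -/
def Dnorm1Sq {d N : ℕ} (R : Finset (Vec d)) (u : Vec d → Vec N) (ℓ : Vec d) : ℝ :=
  ∑ ρ ∈ R, (enorm (D1 ρ u ℓ)) ^ 2

/-- `|D^j u(ℓ)|`, the Euclidean norm of the array `(D_{ρ⃗} u(ℓ))_{ρ⃗ ∈ R^j}`. -/
def DnormJ {d N : ℕ} (R : Finset (Vec d)) (j : ℕ) (u : Vec d → Vec N) (ℓ : Vec d) : ℝ :=
  Real.sqrt (∑ ρs : Fin j → {x // x ∈ R},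
    (enorm (Dmulti (fun i => (ρs i : Vec d)) u ℓ)) ^ 2)

/-- The linearized lattice operator
`H[u](ℓ) = ∑_{σ,ρ∈R} (C_{σρ} D_ρ u(ℓ-σ) - C_{σρ} D_ρ u(ℓ))`. -/
def Hop (d N : ℕ) (R : Finset (Vec d)) (C : Vec d → Vec d → Fin N → Fin N → ℝ)
    (u : Vec d → Vec N) (ℓ : Vec d) : Vec N :=
  ∑ σ ∈ R, ∑ ρ ∈ R, (mulV (C σ ρ) (D1 ρ u (ℓ - σ)) - mulV (C σ ρ) (D1 ρ u ℓ))

/-- `u ∈ 𝓗¹`. -/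
def InH1 {d N : ℕ} (A : Matrix (Fin d) (Fin d) ℝ) (R : Finset (Vec d))
    (u : Vec d → Vec N) : Prop :=
  Summable fun z : Fin d → ℤ => Dnorm1Sq R u (latticePt d A z)

/-- `u ∈ 𝓗ᶜ` : the stencil `Du` has bounded support on the lattice. -/
def InHc {d N : ℕ} (A : Matrix (Fin d) (Fin d) ℝ) (R : Finset (Vec d))
    (u : Vec d → Vec N) : Prop :=
  ∃ rad : ℝ, ∀ z : Fin d → ℤ, rad ≤ enorm (latticePt d A z) →
    ∀ ρ ∈ R, D1 ρ u (latticePt d A z) = 0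

/-- Stability of the lattice operator `H`. -/
def IsStable (d N : ℕ) (A : Matrix (Fin d) (Fin d) ℝ) (R : Finset (Vec d))
    (C : Vec d → Vec d → Fin N → Fin N → ℝ) : Prop :=
  ∃ c₀ : ℝ, 0 < c₀ ∧ ∀ u : Vec d → Vec N, InHc A R u →
    c₀ * (∑' z : Fin d → ℤ, Dnorm1Sq R u (latticePt d A z)) ≤
      ∑' z : Fin d → ℤ, ∑ σ ∈ R, ∑ ρ ∈ R,
        dotV (D1 σ u (latticePt d A z)) (mulV (C σ ρ) (D1 ρ u (latticePt d A z)))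

/-- `k`-th column of a matrix-valued function. -/
def col {d N : ℕ} (G : Vec d → Fin N → Fin N → ℝ) (k : Fin N) : Vec d → Vec N :=
  fun x i => G x i k

/-- `|D^j 𝒢(ℓ)|` for matrix-valued `𝒢`. -/
def DnormJmat {d N : ℕ} (R : Finset (Vec d)) (j : ℕ)
    (G : Vec d → Fin N → Fin N → ℝ) (ℓ : Vec d) : ℝ :=
  Real.sqrt (∑ k : Fin N, (DnormJ R j (col G k) ℓ) ^ 2)

/-- `𝒢` is a lattice Green's function for `H`. -/
def IsLatticeGreen (d N : ℕ) (A : Matrix (Fin d) (Fin d) ℝ) (R : Finset (Vec d))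
    (C : Vec d → Vec d → Fin N → Fin N → ℝ) (G : Vec d → Fin N → Fin N → ℝ) : Prop :=
  (∀ (k : Fin N) (z : Fin d → ℤ),
      Hop d N R C (col G k) (latticePt d A z) =
        if latticePt d A z = 0 then Pi.single k 1 else 0) ∧
  (∀ j : ℕ, 1 ≤ j → ∃ cj : ℝ, ∀ z : Fin d → ℤ,
      DnormJmat R j G (latticePt d A z) ≤
        cj * ang (latticePt d A z) ^ ((2 : ℝ) - d - j))

/-- A symmetric array `b ∈ (ℝ^{Fin d})^{⊙ i}`. -/
def SymArr {d i : ℕ} (b : (Fin i → Fin d) → ℝ) : Prop :=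
  ∀ (π : Equiv.Perm (Fin i)) (σv : Fin i → Fin d), b (σv ∘ π) = b σv

/-- `b : D_𝒮^i f`, a multipole term built from the basis `s`. -/
def multipole (d N : ℕ) (s : Fin d → Vec d) (i : ℕ) (b : (Fin i → Fin d) → ℝ)
    (f : Vec d → Vec N) : Vec d → Vec N :=
  fun ℓ => ∑ σv : Fin i → Fin d, b σv • Dmulti (fun m => s (σv m)) f ℓ

/-- Iterated partial derivative `∂_{j₁} ⋯ ∂_{j_i} f (x)`. -/
def pderivMulti {d : ℕ} (i : ℕ) (js : Fin i → Fin d) (f : Vec d → ℝ) (x : Vec d) : ℝ :=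
  iteratedFDeriv ℝ i f x (fun m => Pi.single (js m) (1 : ℝ))

/-- `a : ∇^i f (x)` for a tensor `a ∈ (ℝ^d)^{⊗ i}`. -/
def aContract {d : ℕ} (i : ℕ) (a : (Fin i → Fin d) → ℝ) (f : Vec d → ℝ) (x : Vec d) : ℝ :=
  ∑ js : Fin i → Fin d, a js * pderivMulti i js f x

/-- Elementary tensor `σ⃗^⊗` as an array. -/
def tensorPow {d k : ℕ} (σs : Fin k → Vec d) : (Fin k → Fin d) → ℝ :=
  fun js => ∏ m, σs m (js m)

/-- Symmetric tensor product `σ⃗^⊙`. -/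
def symTensor {d k : ℕ} (σs : Fin k → Vec d) : (Fin k → Fin d) → ℝ :=
  fun js => ((k.factorial : ℝ))⁻¹ * ∑ π : Equiv.Perm (Fin k), tensorPow (σs ∘ π) js

/-- A symmetric tensor (array invariant under index permutations). -/
def SymTensor {d k : ℕ} (T : (Fin k → Fin d) → ℝ) : Prop :=
  ∀ (π : Equiv.Perm (Fin k)) (js : Fin k → Fin d), T (js ∘ π) = T js

/-- `∂V/∂g_ρ (gs)` as a vector in `ℝ^N`. -/
def gradV {d N : ℕ} (R : Finset (Vec d)) (V : ({x // x ∈ R} → Vec N) → ℝ)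
    (ρ : {x // x ∈ R}) (gs : {x // x ∈ R} → Vec N) : Vec N :=
  fun i => fderiv ℝ V gs (Pi.single ρ (Pi.single i 1))

/-- The finite-difference stencil `Du(ℓ) = (D_ρ u(ℓ))_{ρ ∈ R}`. -/
def Dstencil {d N : ℕ} (R : Finset (Vec d)) (u : Vec d → Vec N) (ℓ : Vec d) :
    {x // x ∈ R} → Vec N :=
  fun ρ => D1 (ρ : Vec d) u ℓ

/-- `C_{σρ} = ∂²V/∂g_σ ∂g_ρ (0)`. -/
def CofV {d N : ℕ} (R : Finset (Vec d)) (V : ({x // x ∈ R} → Vec N) → ℝ)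
    (σ ρ : Vec d) (i j : Fin N) : ℝ :=
  if hσ : σ ∈ R then
    if hρ : ρ ∈ R then
      iteratedFDeriv ℝ 2 V 0
        ![Pi.single ⟨σ, hσ⟩ (Pi.single i 1), Pi.single ⟨ρ, hρ⟩ (Pi.single j 1)]
    else 0
  else 0

/-- Summand of the first variation `δE(u)[v]` at a site. -/
def deltaEsite {d N : ℕ} (R : Finset (Vec d)) (V : ({x // x ∈ R} → Vec N) → ℝ)
    (u v : Vec d → Vec N) (ℓ : Vec d) : ℝ :=
  ∑ ρ ∈ R.attach, dotV (gradV R V ρ (Dstencil R u ℓ)) (D1 (ρ : Vec d) v ℓ)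

/-- The pointwise atomistic force `δE(u)(ℓ)`. -/
def deltaEpt {d N : ℕ} (R : Finset (Vec d)) (V : ({x // x ∈ R} → Vec N) → ℝ)
    (u : Vec d → Vec N) (ℓ : Vec d) : Vec N :=
  ∑ ρ ∈ R.attach,
    (gradV R V ρ (Dstencil R u (ℓ - (ρ : Vec d))) - gradV R V ρ (Dstencil R u ℓ))

/-- Point symmetry of the site potential. -/
def PointSym {d N : ℕ} (R : Finset (Vec d)) (hRsym : ∀ ρ ∈ R, -ρ ∈ R)
    (V : ({x // x ∈ R} → Vec N) → ℝ) : Prop :=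
  ∀ gs : {x // x ∈ R} → Vec N,
    V (fun ρ => -(gs ⟨-(ρ : Vec d), hRsym _ ρ.2⟩)) = V gs

/-- The Cauchy–Born elasticity tensor `ℂ_{iajb}`. -/
def CB {d N : ℕ} (A : Matrix (Fin d) (Fin d) ℝ) (R : Finset (Vec d))
    (C : Vec d → Vec d → Fin N → Fin N → ℝ)
    (i : Fin N) (a : Fin d) (j : Fin N) (b : Fin d) : ℝ :=
  (|A.det|)⁻¹ * ∑ ρ ∈ R, ∑ σ ∈ R, C ρ σ i j * ρ a * σ b

section

/-- Radial weight `log(r+2)^α / (r+2)^m`. -/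
def wt (α : ℝ) (m r : ℕ) : ℝ := Real.log ((r : ℝ) + 2) ^ α / ((r : ℝ) + 2) ^ m

lemma log_pos_aux {x : ℝ} (hx : 2 ≤ x) : 0 < Real.log x := Real.log_pos (by linarith)

lemma wt_pos (α : ℝ) (m r : ℕ) : 0 < wt α m r := by
  unfold wt
  have h2 : (2 : ℝ) ≤ (r : ℝ) + 2 := by have := Nat.cast_nonneg (α := ℝ) r; linarith
  have := log_pos_aux h2
  positivity

lemma exp_aux {u v : ℝ} (hu : 0 ≤ u) (huv : u ≤ v) :
    Real.exp (-v) * (v + 1) ≤ Real.exp (-u) * (u + 1) := by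
  have h1 : v - u + 1 ≤ Real.exp (v - u) := Real.add_one_le_exp _
  have h2 : Real.exp (-u) = Real.exp (-v) * Real.exp (v - u) := by
    rw [← Real.exp_add]; congr 1; ring
  rw [h2, mul_assoc]
  apply mul_le_mul_of_nonneg_left _ (Real.exp_pos _).le
  nlinarith

lemma exists_lam (α : ℝ) : ∃ (lam : ℝ → ℝ) (C : ℝ), 0 < C ∧
    (∀ x y, 2 ≤ x → x ≤ y → lam y ≤ lam x) ∧
    (∀ x, 2 ≤ x → Real.log x ^ α / Real.sqrt x ≤ lam x) ∧
    (∀ x, 2 ≤ x → lam x ≤ C * (Real.log x ^ α / Real.sqrt x)) := by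
  rcases le_or_gt α 0 with h | h
  · refine ⟨fun x => Real.log x ^ α / Real.sqrt x, 1, one_pos, ?_, fun _ _ => le_rfl, ?_⟩
    · intro x y hx hxy
      have h1 := log_pos_aux hx
      have h2 := log_pos_aux (hx.trans hxy)
      have h3 : Real.log x ≤ Real.log y := Real.log_le_log (by linarith) hxy
      have h4 : 0 < Real.sqrt x := Real.sqrt_pos.2 (by linarith)
      apply div_le_div₀ (by positivity)
        (Real.rpow_le_rpow_of_nonpos h1 h3 h) h4 (Real.sqrt_le_sqrt hxy)
    · intro x _; simp
  · have hl2 : 0 < Real.log 2 := Real.log_pos (by norm_num)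
    refine ⟨fun x => (Real.log x + 2 * α) ^ α / Real.sqrt x,
      (1 + 2 * α / Real.log 2) ^ α, by positivity, ?_, ?_, ?_⟩
    · intro x y hx hxy
      have key : ∀ z, 2 ≤ z → (Real.log z + 2 * α) ^ α / Real.sqrt z =
          (2 * α) ^ α * (Real.exp (-(Real.log z / (2 * α))) * (Real.log z / (2 * α) + 1)) ^ α := by
        intro z hz
        have hz1 := log_pos_aux hz
        rw [Real.mul_rpow (Real.exp_pos _).le (by positivity), ← Real.exp_mul,
          mul_left_comm, ← Real.mul_rpow (by positivity) (by positivity)]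
        have e1 : 2 * α * (Real.log z / (2 * α) + 1) = Real.log z + 2 * α := by
          field_simp
        have e2 : Real.exp (-(Real.log z / (2 * α)) * α) = (Real.sqrt z)⁻¹ := by
          have : -(Real.log z / (2 * α)) * α = -(Real.log z / 2) := by field_simp
          rw [this, Real.exp_neg, ← Real.log_sqrt (by linarith), Real.exp_log]
          exact Real.sqrt_pos.2 (by linarith)
        rw [e1, e2]; ring
      show _ / _ ≤ _ / _
      rw [key x hx, key y (hx.trans hxy)]
      have h1 := log_pos_aux hx
      have h2 := log_pos_aux (hx.trans hxy)
      have h3 : Real.log x ≤ Real.log y := Real.log_le_log (by linarith) hxy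
      apply mul_le_mul_of_nonneg_left _ (by positivity)
      apply Real.rpow_le_rpow (by positivity) _ h.le
      apply exp_aux (by positivity)
      gcongr
    · intro x hx
      have h1 := log_pos_aux hx
      show _ ≤ _ / _
      gcongr
      linarith
    · intro x hx
      have h1 := log_pos_aux hx
      have h3 : Real.log 2 ≤ Real.log x := Real.log_le_log (by norm_num) hx
      show _ / _ ≤ _
      rw [← mul_div_assoc, ← Real.mul_rpow (by positivity) h1.le]
      gcongr
      have : 2 * α ≤ 2 * α / Real.log 2 * Real.log x := by
        rw [div_mul_eq_mul_div, le_div_iff₀ hl2]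
        gcongr
      linarith

lemma sqrt_gap {x : ℝ} (hx : 2 ≤ x) :
    1 / (4 * (x * Real.sqrt x)) ≤ 1 / Real.sqrt x - 1 / Real.sqrt (x + 1) := by
  obtain ⟨a, ha⟩ : ∃ a, a = Real.sqrt x := ⟨_, rfl⟩
  obtain ⟨b, hb⟩ : ∃ b, b = Real.sqrt (x + 1) := ⟨_, rfl⟩
  have ha2 : a ^ 2 = x := by rw [ha]; exact Real.sq_sqrt (by linarith)
  have hb2 : b ^ 2 = x + 1 := by rw [hb]; exact Real.sq_sqrt (by linarith)
  have ha0 : 0 < a := by rw [ha]; exact Real.sqrt_pos.2 (by linarith)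
  have hb0 : 0 < b := by rw [hb]; exact Real.sqrt_pos.2 (by linarith)
  rw [← ha, ← hb, ← ha2]
  have hab : a ≤ b := by nlinarith
  have hb3 : 2 * b ≤ 3 * a := by nlinarith
  rw [div_sub_div _ _ ha0.ne' hb0.ne', div_le_div_iff₀ (by positivity) (by positivity)]
  have h1 : (b - a) * (b + a) = 1 := by nlinarith
  have h2 : b * (b + a) ≤ 4 * a ^ 2 := by nlinarith
  have h3 : 0 < b - a := by nlinarith
  have h4 : b ≤ 4 * a^2 * (b - a) := by
    calc b = b * (b + a) * (b - a) := by linear_combination (-b) * h1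
      _ ≤ _ := by gcongr
  nlinarith [mul_le_mul_of_nonneg_left h4 ha0.le]

/-- The supersolution. -/
lemma exists_super (d m : ℕ) (hd : 1 ≤ d) (hm : d + 1 ≤ m) (α : ℝ) :
    ∃ (psi : ℕ → ℝ) (C : ℝ), 0 < C ∧ (∀ r, 0 ≤ psi r) ∧
      (∀ r : ℕ, wt α m r + ((r : ℝ) + d) / (r + 1) * psi (r + 1) ≤ psi r) ∧
      (∀ r, psi r ≤ C * wt α (m - 1) r) := by
  obtain ⟨lam, C1, hC1, anti, lo, hi⟩ := exists_lam α
  obtain ⟨j, rfl⟩ : ∃ j, m = d + 1 + j := ⟨m - (d + 1), by omega⟩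
  obtain ⟨e, rfl⟩ : ∃ e, d = e + 1 := ⟨d - 1, by omega⟩
  have lam_nn : ∀ x, 2 ≤ x → 0 ≤ lam x := fun x hx => le_trans
    (by have := log_pos_aux hx; positivity) (lo x hx)
  let tau : ℝ → ℝ := fun x => 4 * (1 / x ^ j) * (1 / Real.sqrt x) * lam x
  have hr2 : ∀ r : ℕ, (2 : ℝ) ≤ (r : ℝ) + 2 := fun r => by
    have := Nat.cast_nonneg (α := ℝ) r; linarith
  have tau_nn : ∀ x, 2 ≤ x → 0 ≤ tau x := fun x hx => by
    have := lam_nn x hx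
    have : 0 ≤ x := by linarith
    simp only [tau]; positivity
  refine ⟨fun r => tau ((r : ℝ) + 2) / ((r : ℝ) + 1) ^ e, 4 * C1 * 2 ^ e, by positivity, ?_, ?_, ?_⟩
  · intro r
    have := tau_nn _ (hr2 r)
    positivity
  · intro r
    have hx := hr2 r
    obtain ⟨x, hxe⟩ : ∃ x, x = (r : ℝ) + 2 := ⟨_, rfl⟩
    have hx0 : 0 < x := by linarith
    rw [← hxe] at hx
    have hl := log_pos_aux hx
    have e1 : (((r + 1 : ℕ) : ℝ) + 2) = x + 1 := by push_cast; linarith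
    have e2 : (((r + 1 : ℕ) : ℝ) + 1) = x := by push_cast; linarith
    have e3 : (r : ℝ) + 1 = x - 1 := by linarith
    have e4 : (r : ℝ) + ((e + 1 : ℕ) : ℝ) = x - 1 + e := by push_cast; linarith
    simp only [e1, e2, e3, e4, wt, ← hxe]
    have hx1 : 0 < x - 1 := by linarith
    have hs : 0 < Real.sqrt x := Real.sqrt_pos.2 hx0
    -- Bernoulli
    have bern : (x - 1 + e) / (x - 1) ≤ (x / (x - 1)) ^ e := by
      have := one_add_mul_le_pow (a := 1 / (x - 1)) (by
        have : 0 < 1 / (x - 1) := by positivity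
        linarith) e
      have q1 : (x - 1 + e) / (x - 1) = 1 + e * (1 / (x - 1)) := by
        field_simp
      have q2 : x / (x - 1) = 1 + 1 / (x - 1) := by
        rw [eq_comm, one_add_div hx1.ne']; congr 1; ring
      rw [q1, q2]; exact this
    have step1 : (x - 1 + e) / (x - 1) * (tau (x + 1) / x ^ e) ≤ tau (x + 1) / (x - 1) ^ e := by
      have ht := tau_nn (x + 1) (by linarith)
      calc _ ≤ (x / (x - 1)) ^ e * (tau (x + 1) / x ^ e) := by gcongr
        _ = _ := by rw [div_pow]; field_simp
    have step2 : Real.log x ^ α / x ^ (j + 2) ≤ tau x - tau (x + 1) := by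
      have hlx := lam_nn x hx
      have a1 : tau (x + 1) ≤ 4 * (1 / x ^ j) * (1 / Real.sqrt (x + 1)) * lam x := by
        have := anti x (x + 1) hx (by linarith)
        have h0 := lam_nn (x + 1) (by linarith)
        simp only [tau]
        gcongr
        linarith
      have a2 := sqrt_gap hx
      have a3 : 4 * (1 / x ^ j) * (1 / (4 * (x * Real.sqrt x))) * lam x ≤
          4 * (1 / x ^ j) * (1 / Real.sqrt x - 1 / Real.sqrt (x + 1)) * lam x := by
        gcongr
      have a4 : Real.log x ^ α / x ^ (j + 2) ≤
          4 * (1 / x ^ j) * (1 / (4 * (x * Real.sqrt x))) * lam x := by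
        calc Real.log x ^ α / x ^ (j + 2)
            = 4 * (1 / x ^ j) * (1 / (4 * (x * Real.sqrt x))) *
              (Real.log x ^ α / Real.sqrt x) := by
              have : Real.sqrt x * Real.sqrt x = x := Real.mul_self_sqrt hx0.le
              have h2 : x ^ (j + 2) = x ^ j * x * (Real.sqrt x * Real.sqrt x) := by
                rw [this]; ring
              rw [h2]; field_simp
          _ ≤ _ := by
              gcongr
              exact lo x hx
      have : tau x = 4 * (1 / x ^ j) * (1 / Real.sqrt x) * lam x := rfl
      nlinarith
    have step3 : Real.log x ^ α / x ^ (e + 1 + 1 + j) ≤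
        (Real.log x ^ α / x ^ (j + 2)) / (x - 1) ^ e := by
      rw [div_div]
      have : x ^ (e + 1 + 1 + j) = x ^ (j + 2) * x ^ e := by ring
      rw [this]
      gcongr
      linarith
    calc _ ≤ (tau x - tau (x + 1)) / (x - 1) ^ e + tau (x + 1) / (x - 1) ^ e := by
          apply add_le_add _ step1
          refine step3.trans ?_
          gcongr
      _ = _ := by ring
  · intro r
    have hx := hr2 r
    obtain ⟨x, hxe⟩ : ∃ x, x = (r : ℝ) + 2 := ⟨_, rfl⟩
    have hx0 : 0 < x := by linarith
    rw [← hxe] at hx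
    have hl := log_pos_aux hx
    have e3 : (r : ℝ) + 1 = x - 1 := by linarith
    simp only [e3, wt, ← hxe]
    have hx1 : 0 < x - 1 := by linarith
    have hs : 0 < Real.sqrt x := Real.sqrt_pos.2 hx0
    have e5 : e + 1 + 1 + j - 1 = e + 1 + j := by omega
    rw [e5]
    have b1 : tau x ≤ 4 * (1 / x ^ j) * (1 / Real.sqrt x) * (C1 * (Real.log x ^ α / Real.sqrt x)) := by
      simp only [tau]
      gcongr
      exact hi x hx
    have b2 : 1 / (x - 1) ^ e ≤ 2 ^ e / x ^ e := by
      rw [← div_pow, ← one_div_pow]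
      gcongr ?_ ^ e
      rw [div_le_div_iff₀ hx1 hx0]; linarith
    calc tau x / (x - 1) ^ e = tau x * (1 / (x - 1) ^ e) := by ring
      _ ≤ (4 * (1 / x ^ j) * (1 / Real.sqrt x) * (C1 * (Real.log x ^ α / Real.sqrt x))) *
            (2 ^ e / x ^ e) := by
          gcongr
      _ = _ := by
          have : Real.sqrt x * Real.sqrt x = x := Real.mul_self_sqrt hx0.le
          have h2 : x ^ (e + 1 + j) = x ^ j * x ^ e * (Real.sqrt x * Real.sqrt x) := by
            rw [this]; ring
          rw [h2]; field_simp

end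

section

/-- `ℓ¹` size of an integer vector. -/
def l1 {d : ℕ} (z : Fin d → ℤ) : ℕ := ∑ i, (z i).natAbs

lemma prod_shift {d : ℕ} (f : Fin d → ℤ → ℝ) (z : Fin d → ℤ) (i : Fin d) (c : ℤ) :
    ∏ j, f j ((z + Pi.single i c : Fin d → ℤ) j) =
      f i (z i + c) * ∏ j ∈ Finset.univ.erase i, f j (z j) := by
  rw [← Finset.mul_prod_erase Finset.univ _ (Finset.mem_univ i)]
  congr 1
  · simp
  · apply Finset.prod_congr rfl
    intro j hj
    simp [Finset.ne_of_mem_erase hj]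

lemma sum_shift {d : ℕ} (f : Fin d → ℤ → ℕ) (z : Fin d → ℤ) (i : Fin d) (c : ℤ) :
    ∑ j, f j ((z + Pi.single i c : Fin d → ℤ) j) =
      f i (z i + c) + ∑ j ∈ Finset.univ.erase i, f j (z j) := by
  rw [← Finset.add_sum_erase Finset.univ _ (Finset.mem_univ i)]
  congr 1
  · simp
  · apply Finset.sum_congr rfl
    intro j hj
    simp [Finset.ne_of_mem_erase hj]

lemma sub_single {d : ℕ} (z : Fin d → ℤ) (i : Fin d) :
    z - Pi.single i 1 = z + Pi.single i (-1) := by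
  rw [Pi.single_neg, sub_eq_add_neg]

lemma l1_split {d : ℕ} (z : Fin d → ℤ) (i : Fin d) :
    l1 z = (z i).natAbs + ∑ j ∈ Finset.univ.erase i, (z j).natAbs :=
  (Finset.add_sum_erase Finset.univ (fun j => (z j).natAbs) (Finset.mem_univ i)).symm

lemma l1_add {d : ℕ} (z : Fin d → ℤ) (i : Fin d) (h : 0 ≤ z i) :
    l1 (z + Pi.single i 1) = l1 z + 1 := by
  rw [l1_split z i]
  unfold l1
  rw [sum_shift (fun _ x => x.natAbs)]
  omega

lemma l1_sub {d : ℕ} (z : Fin d → ℤ) (i : Fin d) (h : z i ≤ 0) :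
    l1 (z - Pi.single i 1) = l1 z + 1 := by
  rw [l1_split z i, sub_single]
  unfold l1
  rw [sum_shift (fun _ x => x.natAbs)]
  omega

/-- One-dimensional factor of the kernel. -/
def ck (y z : ℤ) : ℝ :=
  if z = 0 then 1 else if 0 < z * y then ((y.natAbs.choose z.natAbs : ℕ) : ℝ) else 0

lemma ck_nonneg (y z : ℤ) : 0 ≤ ck y z := by
  unfold ck; split_ifs <;> positivity

lemma ck_neg (y z : ℤ) : ck (-y) (-z) = ck y z := by
  unfold ck; simp

lemma choose_rec (n k : ℕ) :
    ((k : ℝ) + 1) * (n.choose (k + 1) : ℕ) = ((n : ℝ) - k) * (n.choose k : ℕ) := by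
  rcases le_or_gt k n with h | h
  · have := Nat.choose_succ_right_eq n k
    have h2 : ((n.choose (k + 1) * (k + 1) : ℕ) : ℝ) = ((n.choose k * (n - k) : ℕ) : ℝ) := by
      rw [this]
    push_cast [Nat.cast_sub h] at h2
    linarith
  · rw [Nat.choose_eq_zero_of_lt h, Nat.choose_eq_zero_of_lt (by omega)]; simp

lemma ck_rec_pos (y z : ℤ) (hz : 0 < z) :
    ((z.natAbs : ℝ) + 1) * ck y (z + 1) = ((y.natAbs : ℝ) - z.natAbs) * ck y z := by
  unfold ck
  rw [if_neg (show ¬ z + 1 = 0 by omega), if_neg (show ¬ z = 0 by omega)]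
  by_cases hy : 0 < y
  · rw [if_pos (by positivity), if_pos (by positivity)]
    have : (z + 1).natAbs = z.natAbs + 1 := by omega
    rw [this]; exact choose_rec _ _
  · rw [if_neg (by nlinarith), if_neg (by nlinarith)]; simp

lemma ck_rec (y z : ℤ) :
    ((z.natAbs : ℝ) + 1) * ((if 0 ≤ z then ck y (z + 1) else 0) +
      (if z ≤ 0 then ck y (z - 1) else 0)) = ((y.natAbs : ℝ) - z.natAbs) * ck y z := by
  rcases lt_trichotomy z 0 with h | h | h
  · rw [if_neg (by omega), if_pos (by omega), zero_add]
    have := ck_rec_pos (-y) (-z) (by omega)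
    rw [ck_neg, show -z + 1 = -(z - 1) by ring, ck_neg] at this
    simpa using this
  · subst h
    unfold ck
    rcases lt_trichotomy y 0 with hy | hy | hy
    · simp [hy, hy.not_gt]
    · simp [hy]
    · simp [hy, hy.not_gt]
  · rw [if_pos (by omega), if_neg (by omega), add_zero]
    exact ck_rec_pos y z h

lemma ck_self (y : ℤ) : ck y y = 1 := by
  unfold ck
  split_ifs with h1 h2
  · rfl
  · simp
  · exact absurd (mul_self_pos.2 h1) h2

lemma ck_zero_of_lt (y z : ℤ) (h : y.natAbs < z.natAbs) : ck y z = 0 := by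
  unfold ck
  rw [if_neg (by omega)]
  split_ifs
  · rw [Nat.choose_eq_zero_of_lt h]; simp
  · rfl

lemma ck_zero_of_opp (y z : ℤ) (h : y.natAbs = z.natAbs) (hne : z ≠ y) : ck y z = 0 := by
  have : z = -y := by omega
  subst this
  unfold ck
  rw [if_neg (by omega), if_neg (by nlinarith [mul_self_nonneg y])]

variable {d : ℕ}

/-- Hitting kernel of the reversed Polya urn walk on `ℤ^d`. -/
def Ker (z y : Fin d → ℤ) : ℝ := (∏ i, ck (y i) (z i)) / ((l1 y).choose (l1 z) : ℕ)

lemma Ker_nonneg (z y : Fin d → ℤ) : 0 ≤ Ker z y :=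
  div_nonneg (Finset.prod_nonneg fun _ _ => ck_nonneg _ _) (Nat.cast_nonneg _)

lemma Ker_of_lt (z y : Fin d → ℤ) (h : l1 y < l1 z) : Ker z y = 0 := by
  unfold Ker; rw [Nat.choose_eq_zero_of_lt h]; simp

lemma l1_zero : l1 (0 : Fin d → ℤ) = 0 := by simp [l1]

lemma l1_eq_zero (z : Fin d → ℤ) (h : l1 z = 0) : z = 0 := by
  funext i
  have := (Finset.sum_eq_zero_iff.1 h) i (Finset.mem_univ i)
  simpa using this

lemma Ker_zero (y : Fin d → ℤ) : Ker 0 y = 1 := by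
  unfold Ker; simp [l1_zero, ck]

lemma Ker_level (z y : Fin d → ℤ) (h : l1 z = l1 y) : Ker z y = if z = y then 1 else 0 := by
  unfold Ker
  rw [h, Nat.choose_self]
  split_ifs with e
  · subst e; simp [ck_self]
  · have : ∃ i, ck (y i) (z i) = 0 := by
      by_cases hlt : ∃ i, (y i).natAbs < (z i).natAbs
      · obtain ⟨i, hi⟩ := hlt
        exact ⟨i, ck_zero_of_lt _ _ hi⟩
      · push Not at hlt
        have := (Finset.sum_eq_sum_iff_of_le (s := Finset.univ) (fun i _ => hlt i)).1 h
        obtain ⟨i, hi⟩ := Function.ne_iff.1 e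
        exact ⟨i, ck_zero_of_opp _ _ (this i (Finset.mem_univ i)).symm hi⟩
    obtain ⟨i, hi⟩ := this
    rw [Finset.prod_eq_zero (Finset.mem_univ i) hi]; simp

/-- Sum over the children of `z`, weighted by the transition probabilities. -/
def Ch (u : (Fin d → ℤ) → ℝ) (z : Fin d → ℤ) : ℝ :=
  ∑ i, (((z i).natAbs : ℝ) + 1) / ((l1 z : ℝ) + 1) *
    ((if 0 ≤ z i then u (z + Pi.single i 1) else 0) +
      (if z i ≤ 0 then u (z - Pi.single i 1) else 0))

lemma Ch_congr {u v : (Fin d → ℤ) → ℝ} {z : Fin d → ℤ}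
    (h : ∀ y, l1 y = l1 z + 1 → u y = v y) : Ch u z = Ch v z := by
  unfold Ch
  apply Finset.sum_congr rfl
  intro i _
  congr 2
  · split_ifs with h0
    · exact h _ (l1_add _ _ h0)
    · rfl
  · split_ifs with h0
    · exact h _ (l1_sub _ _ h0)
    · rfl

lemma Ch_mono {u v : (Fin d → ℤ) → ℝ} {z : Fin d → ℤ}
    (h : ∀ y, l1 y = l1 z + 1 → u y ≤ v y) : Ch u z ≤ Ch v z := by
  unfold Ch
  apply Finset.sum_le_sum
  intro i _
  apply mul_le_mul_of_nonneg_left _ (by positivity)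
  apply add_le_add
  · split_ifs with h0
    · exact h _ (l1_add _ _ h0)
    · rfl
  · split_ifs with h0
    · exact h _ (l1_sub _ _ h0)
    · rfl

lemma Ch_zero (z : Fin d → ℤ) : Ch (fun _ => 0) z = 0 := by
  unfold Ch; simp

lemma Ker_rec (z y : Fin d → ℤ) :
    Ker z y = (if z = y then 1 else 0) + Ch (fun x => Ker x y) z := by
  rcases lt_trichotomy (l1 z) (l1 y) with h | h | h
  · rw [if_neg (by rintro rfl; exact lt_irrefl _ h), zero_add]
    have hc : (((l1 y).choose (l1 z + 1) : ℕ) : ℝ) ≠ 0 := by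
      exact_mod_cast (Nat.choose_pos h).ne'
    have hc0 : (((l1 y).choose (l1 z) : ℕ) : ℝ) ≠ 0 := by
      exact_mod_cast (Nat.choose_pos h.le).ne'
    have hrec := choose_rec (l1 y) (l1 z)
    have hr : ((l1 z : ℝ) + 1) ≠ 0 := by positivity
    have term : ∀ i, (((z i).natAbs : ℝ) + 1) / ((l1 z : ℝ) + 1) *
        ((if 0 ≤ z i then Ker (z + Pi.single i 1) y else 0) +
        (if z i ≤ 0 then Ker (z - Pi.single i 1) y else 0)) =
        (((y i).natAbs : ℝ) - (z i).natAbs) * ((∏ j, ck (y j) (z j)) /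
          (((l1 z : ℝ) + 1) * ((l1 y).choose (l1 z + 1) : ℕ))) := by
      intro i
      have A : (if 0 ≤ z i then Ker (z + Pi.single i 1) y else 0) =
          (if 0 ≤ z i then ck (y i) (z i + 1) else 0) *
            ((∏ j ∈ Finset.univ.erase i, ck (y j) (z j)) / ((l1 y).choose (l1 z + 1) : ℕ)) := by
        split_ifs with h0
        · unfold Ker
          rw [l1_add _ _ h0, prod_shift (fun j x => ck (y j) x), mul_div_assoc]
        · simp
      have B : (if z i ≤ 0 then Ker (z - Pi.single i 1) y else 0) =
          (if z i ≤ 0 then ck (y i) (z i - 1) else 0) *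
            ((∏ j ∈ Finset.univ.erase i, ck (y j) (z j)) / ((l1 y).choose (l1 z + 1) : ℕ)) := by
        split_ifs with h0
        · unfold Ker
          rw [l1_sub _ _ h0, sub_single, prod_shift (fun j x => ck (y j) x), mul_div_assoc]
          rfl
        · simp
      rw [A, B, ← add_mul, ← mul_assoc, div_mul_eq_mul_div, ck_rec,
        ← Finset.mul_prod_erase Finset.univ (fun j => ck (y j) (z j)) (Finset.mem_univ i)]
      field_simp
    unfold Ch
    rw [Finset.sum_congr rfl (fun i _ => term i), ← Finset.sum_mul, Finset.sum_sub_distrib]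
    have s1 : ∑ i, ((y i).natAbs : ℝ) = l1 y := by unfold l1; push_cast; rfl
    have s2 : ∑ i, ((z i).natAbs : ℝ) = l1 z := by unfold l1; push_cast; rfl
    rw [s1, s2, hrec]
    unfold Ker
    have : (l1 y : ℝ) - l1 z ≠ 0 := by
      have : (l1 z : ℝ) < l1 y := by exact_mod_cast h
      linarith
    field_simp
  · rw [Ker_level z y h, Ch_congr (v := fun _ => 0), Ch_zero, add_zero]
    intro x hx
    exact Ker_of_lt _ _ (by omega)
  · rw [Ker_of_lt z y h, if_neg (by rintro rfl; exact lt_irrefl _ h),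
      Ch_congr (v := fun _ => 0), Ch_zero, add_zero]
    intro x hx
    exact Ker_of_lt _ _ (by omega)

/-- Face weight. -/
def Wf (z : Fin d → ℤ) : ℝ := ∏ i, (if z i = 0 then 2 else 1)

lemma Wf_one_le (z : Fin d → ℤ) : 1 ≤ Wf z := by
  unfold Wf
  calc (1 : ℝ) = ∏ i : Fin d, (1 : ℝ) := by simp
    _ ≤ _ := by
        apply Finset.prod_le_prod
        · intro i _; norm_num
        · intro i _; split_ifs <;> norm_num

lemma Wf_le (z : Fin d → ℤ) : Wf z ≤ 2 ^ d := by
  unfold Wf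
  calc _ ≤ ∏ i : Fin d, (2 : ℝ) := by
        apply Finset.prod_le_prod
        · intro i _; split_ifs <;> norm_num
        · intro i _; split_ifs <;> norm_num
    _ = _ := by simp

lemma Ch_Wf (psi : ℕ → ℝ) (z : Fin d → ℤ) :
    Ch (fun x => Wf x * psi (l1 x)) z =
      Wf z * (((l1 z : ℝ) + d) / ((l1 z : ℝ) + 1) * psi (l1 z + 1)) := by
  have term : ∀ i, (((z i).natAbs : ℝ) + 1) / ((l1 z : ℝ) + 1) *
        ((if 0 ≤ z i then Wf (z + Pi.single i 1) * psi (l1 (z + Pi.single i 1)) else 0) +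
        (if z i ≤ 0 then Wf (z - Pi.single i 1) * psi (l1 (z - Pi.single i 1)) else 0)) =
        (((z i).natAbs : ℝ) + 1) * (Wf z * psi (l1 z + 1) / ((l1 z : ℝ) + 1)) := by
    intro i
    set E : ℝ := ∏ j ∈ Finset.univ.erase i, (if z j = 0 then 2 else 1) with hE
    have hW : Wf z = (if z i = 0 then 2 else 1) * E :=
      (Finset.mul_prod_erase Finset.univ (fun j => if z j = 0 then (2 : ℝ) else 1)
        (Finset.mem_univ i)).symm
    have hA : Wf (z + Pi.single i 1) = (if z i + 1 = 0 then 2 else 1) * E := by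
      unfold Wf
      rw [prod_shift (fun j x => if x = 0 then (2 : ℝ) else 1)]
    have hB : Wf (z - Pi.single i 1) = (if z i + -1 = 0 then 2 else 1) * E := by
      unfold Wf
      rw [sub_single, prod_shift (fun j x => if x = 0 then (2 : ℝ) else 1)]
    rcases lt_trichotomy (z i) 0 with h | h | h
    · rw [if_neg (by omega), if_pos (by omega), l1_sub _ _ h.le, hB, hW, if_neg (by omega),
        if_neg (by omega)]
      ring
    · rw [if_pos (by omega), if_pos (by omega), l1_sub _ _ h.le, l1_add _ _ h.ge, hA, hB, hW,
        if_neg (by omega), if_neg (by omega), if_pos h]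
      ring
    · rw [if_pos (by omega), if_neg (by omega), l1_add _ _ h.le, hA, hW, if_neg (by omega),
        if_neg (by omega)]
      ring
  unfold Ch
  rw [Finset.sum_congr rfl (fun i _ => term i), ← Finset.sum_mul, Finset.sum_add_distrib]
  have s2 : ∑ i, ((z i).natAbs : ℝ) = l1 z := by unfold l1; push_cast; rfl
  rw [s2]
  simp only [Finset.sum_const, Finset.card_univ, Fintype.card_fin, nsmul_eq_mul, mul_one]
  ring

lemma Ch_sum {ι : Type*} (Y : Finset ι) (c : ι → ℝ) (u : ι → (Fin d → ℤ) → ℝ) (z : Fin d → ℤ) :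
    Ch (fun x => ∑ y ∈ Y, u y x * c y) z = ∑ y ∈ Y, Ch (u y) z * c y := by
  unfold Ch
  simp_rw [Finset.sum_mul]
  rw [Finset.sum_comm]
  apply Finset.sum_congr rfl
  intro i _
  simp_rw [mul_assoc, ← Finset.mul_sum]
  congr 1
  simp_rw [add_mul, Finset.sum_add_distrib]
  congr 1 <;> split_ifs <;> simp

/-- Maximum principle. -/
lemma Ker_sum_le (phi psi : ℕ → ℝ) (hphi : ∀ r, 0 ≤ phi r) (hpsi : ∀ r, 0 ≤ psi r)
    (hsup : ∀ r : ℕ, phi r + ((r : ℝ) + d) / (r + 1) * psi (r + 1) ≤ psi r)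
    (Y : Finset (Fin d → ℤ)) (z : Fin d → ℤ) :
    ∑ y ∈ Y, Ker z y * phi (l1 y) ≤ Wf z * psi (l1 z) := by
  have hW0 : ∀ z : Fin d → ℤ, 0 ≤ Wf z := fun z => zero_le_one.trans (Wf_one_le z)
  have base : ∀ z : Fin d → ℤ, Y.sup l1 < l1 z →
      ∑ y ∈ Y, Ker z y * phi (l1 y) ≤ Wf z * psi (l1 z) := by
    intro z hz
    rw [Finset.sum_eq_zero]
    · exact mul_nonneg (hW0 z) (hpsi _)
    · intro y hy
      rw [Ker_of_lt, zero_mul]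
      exact lt_of_le_of_lt (Finset.le_sup hy) hz
  have main : ∀ n : ℕ, ∀ z : Fin d → ℤ, Y.sup l1 < l1 z + n →
      ∑ y ∈ Y, Ker z y * phi (l1 y) ≤ Wf z * psi (l1 z) := by
    intro n
    induction n with
    | zero => intro z hz; exact base z (by simpa using hz)
    | succ n ih =>
      intro z hz
      have e : ∑ y ∈ Y, Ker z y * phi (l1 y) =
          ∑ y ∈ Y, (if z = y then 1 else 0) * phi (l1 y) +
            Ch (fun x => ∑ y ∈ Y, Ker x y * phi (l1 y)) z := by
        rw [Ch_sum Y (fun y => phi (l1 y)) (fun y x => Ker x y), ← Finset.sum_add_distrib]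
        apply Finset.sum_congr rfl
        intro y _
        rw [Ker_rec z y, add_mul]
      rw [e]
      have h1 : ∑ y ∈ Y, (if z = y then (1 : ℝ) else 0) * phi (l1 y) ≤ Wf z * phi (l1 z) := by
        have : ∑ y ∈ Y, (if z = y then (1 : ℝ) else 0) * phi (l1 y) ≤ phi (l1 z) := by
          simp only [ite_mul, one_mul, zero_mul, Finset.sum_ite_eq]
          split_ifs
          · exact le_rfl
          · exact hphi _
        nlinarith [Wf_one_le z, hphi (l1 z)]
      have h2 : Ch (fun x => ∑ y ∈ Y, Ker x y * phi (l1 y)) z ≤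
          Ch (fun x => Wf x * psi (l1 x)) z := by
        apply Ch_mono
        intro x hx
        exact ih x (by omega)
      rw [Ch_Wf] at h2
      nlinarith [hsup (l1 z), hW0 z, mul_le_mul_of_nonneg_left (hsup (l1 z)) (hW0 z)]
  exact main (Y.sup l1 + 1) z (by omega)

end

section

variable {d : ℕ}

lemma wt_summable (hd : 1 ≤ d) (α : ℝ) (m : ℕ) (hm : d + 1 ≤ m) :
    Summable (fun z : Fin d → ℤ => wt α m (l1 z)) := by
  obtain ⟨psi, C, hC, h0, hs, hb⟩ := exists_super d m hd hm α
  apply summable_of_sum_le (c := Wf (0 : Fin d → ℤ) * psi (l1 (0 : Fin d → ℤ)))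
  · intro z; exact (wt_pos _ _ _).le
  · intro Y
    have := Ker_sum_le (wt α m) psi (fun r => (wt_pos _ _ _).le) h0 hs Y 0
    simpa [Ker_zero] using this

/-- Total mass through a site. -/
def Hs (g : (Fin d → ℤ) → ℝ) (z : Fin d → ℤ) : ℝ := ∑' y, Ker z y * g y

/-- Mass leaving `z` in direction `i`. -/
def Vs (g : (Fin d → ℤ) → ℝ) (i : Fin d) (z : Fin d → ℤ) : ℝ :=
  ((z i).natAbs : ℝ) / (l1 z : ℝ) * Hs g z

/-- Explicit solution of the divergence equation. -/
def sol (g : (Fin d → ℤ) → ℝ) (i : Fin d) (z : Fin d → ℤ) : ℝ :=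
  if 0 ≤ z i then Vs g i (z + Pi.single i 1) else - Vs g i z

lemma Ch_hasSum {ι : Type*} (c : ι → ℝ) (u : ι → (Fin d → ℤ) → ℝ) (H : (Fin d → ℤ) → ℝ)
    (h : ∀ x, HasSum (fun y => u y x * c y) (H x)) (z : Fin d → ℤ) :
    HasSum (fun y => Ch (u y) z * c y) (Ch H z) := by
  unfold Ch
  simp_rw [Finset.sum_mul]
  apply hasSum_sum
  intro i _
  simp_rw [mul_assoc]
  apply HasSum.mul_left
  simp_rw [add_mul]
  apply HasSum.add
  · split_ifs
    · exact h _
    · simp [hasSum_zero]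
  · split_ifs
    · exact h _
    · simp [hasSum_zero]

lemma natAbs_le_l1 (z : Fin d → ℤ) (i : Fin d) : (z i).natAbs ≤ l1 z := by
  rw [l1_split z i]; omega

lemma sol_spec (hd : 1 ≤ d) (α : ℝ) (m : ℕ) (hm : d + 1 ≤ m) :
    ∃ C : ℝ, 0 < C ∧ ∀ (B : ℝ) (g : (Fin d → ℤ) → ℝ),
      (∀ z, |g z| ≤ B * wt α m (l1 z)) → HasSum g 0 →
      (∀ z, g z = ∑ i, (sol g i (z - Pi.single i 1) - sol g i z)) ∧
      (∀ i z, |sol g i z| ≤ C * B * wt α (m - 1) (l1 z)) := by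
  obtain ⟨psi, C, hC, h0, hs, hb⟩ := exists_super d m hd hm α
  refine ⟨2 ^ d * C, by positivity, ?_⟩
  intro B g hg hsum
  have hB : 0 ≤ B := by
    have := (abs_nonneg _).trans (hg 0)
    exact nonneg_of_mul_nonneg_left this (wt_pos _ _ _)
  have hY := Ker_sum_le (d := d) (wt α m) psi (fun r => (wt_pos _ _ _).le) h0 hs
  have S0 : ∀ z : Fin d → ℤ, Summable (fun y => Ker z y * wt α m (l1 y)) := fun z =>
    summable_of_sum_le (fun y => mul_nonneg (Ker_nonneg _ _) (wt_pos _ _ _).le)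
      (fun Y => hY Y z)
  have T0 : ∀ z : Fin d → ℤ, ∑' y, Ker z y * wt α m (l1 y) ≤ Wf z * psi (l1 z) := fun z =>
    (S0 z).tsum_le_of_sum_le (fun Y => hY Y z)
  have bd : ∀ z y : Fin d → ℤ, ‖Ker z y * g y‖ ≤ B * (Ker z y * wt α m (l1 y)) := by
    intro z y
    rw [Real.norm_eq_abs, abs_mul, abs_of_nonneg (Ker_nonneg z y)]
    calc _ ≤ Ker z y * (B * wt α m (l1 y)) :=
          mul_le_mul_of_nonneg_left (hg y) (Ker_nonneg z y)
      _ = _ := by ring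
  have S1 : ∀ z : Fin d → ℤ, Summable (fun y => Ker z y * g y) := fun z =>
    Summable.of_norm_bounded ((S0 z).mul_left B) (bd z)
  have HH : ∀ z, HasSum (fun y => Ker z y * g y) (Hs g z) := fun z => (S1 z).hasSum
  have Hb : ∀ z, |Hs g z| ≤ B * (2 ^ d * psi (l1 z)) := by
    intro z
    have := tsum_of_norm_bounded ((S0 z).mul_left B).hasSum (bd z)
    rw [Real.norm_eq_abs, tsum_mul_left] at this
    refine this.trans ?_
    apply mul_le_mul_of_nonneg_left _ hB
    refine (T0 z).trans ?_
    exact mul_le_mul_of_nonneg_right (Wf_le z) (h0 _)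
  have H0 : Hs g 0 = 0 := by
    unfold Hs
    simp only [Ker_zero, one_mul]
    exact hsum.tsum_eq
  have Hrec : ∀ z, Hs g z = g z + Ch (Hs g) z := by
    intro z
    have h1 := Ch_hasSum g (fun y x => Ker x y) (Hs g) HH z
    have h2 : HasSum (fun y => (if z = y then (1 : ℝ) else 0) * g y) (g z) := by
      have := hasSum_ite_eq z (g z)
      convert this using 2 with y
      by_cases h : z = y
      · subst h; simp
      · simp [h, Ne.symm h]
    have h3 := h2.add h1
    have h4 := HH z
    refine h4.unique ?_
    convert h3 using 2 with y
    rw [Ker_rec z y, add_mul]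
  have Vb : ∀ i z, |Vs g i z| ≤ |Hs g z| := by
    intro i z
    unfold Vs
    rw [abs_mul]
    have : |((z i).natAbs : ℝ) / (l1 z : ℝ)| ≤ 1 := by
      rw [abs_of_nonneg (by positivity)]
      apply div_le_one_of_le₀ _ (by positivity)
      exact_mod_cast natAbs_le_l1 z i
    exact mul_le_of_le_one_left (abs_nonneg _) this
  have psi_anti : ∀ r, psi (r + 1) ≤ psi r := by
    intro r
    have h1 := hs r
    have h2 : 1 ≤ ((r : ℝ) + d) / (r + 1) := by
      rw [le_div_iff₀ (by positivity)]
      have : (1 : ℝ) ≤ d := by exact_mod_cast hd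
      linarith
    nlinarith [wt_pos α m r, h0 (r + 1)]
  constructor
  · intro z
    have sumV : ∑ i, Vs g i z = Hs g z := by
      unfold Vs
      rw [← Finset.sum_mul, ← Finset.sum_div]
      have s2 : ∑ i, ((z i).natAbs : ℝ) = l1 z := by unfold l1; push_cast; rfl
      rw [s2]
      by_cases hz : l1 z = 0
      · rw [l1_eq_zero z hz, H0, mul_zero]
      · rw [div_self (by exact_mod_cast hz), one_mul]
    have : ∑ i, (sol g i (z - Pi.single i 1) - sol g i z) = ∑ i, Vs g i z - Ch (Hs g) z := by
      unfold Ch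
      rw [← Finset.sum_sub_distrib]
      apply Finset.sum_congr rfl
      intro i _
      have ea : 0 ≤ z i → Vs g i (z + Pi.single i 1) =
          (((z i).natAbs : ℝ) + 1) / ((l1 z : ℝ) + 1) * Hs g (z + Pi.single i 1) := by
        intro h
        unfold Vs
        rw [l1_add _ _ h]
        have : ((z + Pi.single i 1 : Fin d → ℤ) i).natAbs = (z i).natAbs + 1 := by
          simp; omega
        rw [this]; push_cast; rfl
      have eb : z i ≤ 0 → Vs g i (z - Pi.single i 1) =
          (((z i).natAbs : ℝ) + 1) / ((l1 z : ℝ) + 1) * Hs g (z - Pi.single i 1) := by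
        intro h
        unfold Vs
        rw [l1_sub _ _ h]
        have : ((z - Pi.single i 1 : Fin d → ℤ) i).natAbs = (z i).natAbs + 1 := by
          simp; omega
        rw [this]; push_cast; rfl
      have ec : (z - Pi.single i 1 : Fin d → ℤ) i = z i - 1 := by simp
      unfold sol
      rw [ec, sub_add_cancel]
      rcases lt_trichotomy (z i) 0 with h | h | h
      · rw [if_neg (by omega), if_neg (by omega), if_neg (by omega), if_pos (by omega),
          eb h.le]
        ring
      · rw [if_neg (by omega), if_pos (by omega), if_pos (by omega), if_pos (by omega),
          eb h.le, ea h.ge]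
        have : Vs g i z = 0 := by unfold Vs; simp [h]
        rw [this]; ring
      · rw [if_pos (by omega), if_pos (by omega), if_pos (by omega), if_neg (by omega),
          ea h.le]
        ring
    rw [this, sumV, Hrec z]; ring
  · intro i z
    have key : |sol g i z| ≤ B * (2 ^ d * psi (l1 z)) := by
      unfold sol
      split_ifs with h
      · refine (Vb _ _).trans ((Hb _).trans ?_)
        rw [l1_add _ _ h]
        gcongr
        exact psi_anti _
      · rw [abs_neg]
        exact (Vb _ _).trans (Hb _)
    calc _ ≤ B * (2 ^ d * psi (l1 z)) := key
      _ ≤ B * (2 ^ d * (C * wt α (m - 1) (l1 z))) := by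
          gcongr
          exact hb _
      _ = _ := by ring

/-- Cutoff. -/
def eta (n : ℕ) (z : Fin d → ℤ) : ℝ := max 0 (1 - (l1 z : ℝ) / (n + 1))

lemma l1_add_le (z : Fin d → ℤ) (i : Fin d) : l1 (z + Pi.single i 1) ≤ l1 z + 1 ∧
    l1 z ≤ l1 (z + Pi.single i 1) + 1 := by
  have e : l1 (z + Pi.single i 1) =
      (z i + 1).natAbs + ∑ j ∈ Finset.univ.erase i, (z j).natAbs := by
    unfold l1
    rw [sum_shift (fun _ x => x.natAbs)]
  rw [e, l1_split z i]
  omega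

lemma eta_finite (n : ℕ) : (Function.support (eta (d := d) n)).Finite := by
  apply Set.Finite.subset (Set.finite_Icc (fun _ : Fin d => -((n : ℤ) + 1)) (fun _ => (n : ℤ) + 1))
  intro z hz
  have : (l1 z : ℝ) < n + 1 := by
    by_contra hcon
    push Not at hcon
    apply hz
    unfold eta
    apply max_eq_left
    have : 1 ≤ (l1 z : ℝ) / (n + 1) := by
      rw [le_div_iff₀ (by positivity)]; linarith
    linarith
  have h2 : l1 z < n + 1 := by exact_mod_cast this
  constructor
  · intro i
    have := natAbs_le_l1 z i
    show -((n : ℤ) + 1) ≤ z i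
    omega
  · intro i
    have := natAbs_le_l1 z i
    show z i ≤ (n : ℤ) + 1
    omega

lemma eta_nonneg (n : ℕ) (z : Fin d → ℤ) : 0 ≤ eta n z := le_max_left _ _

lemma eta_le (n : ℕ) (z : Fin d → ℤ) : eta n z ≤ 1 := by
  unfold eta
  apply max_le zero_le_one
  have : 0 ≤ (l1 z : ℝ) / (n + 1) := by positivity
  linarith

lemma eta_tendsto (z : Fin d → ℤ) : Tendsto (fun n => eta n z) atTop (𝓝 1) := by
  have h : Tendsto (fun n : ℕ => 1 - (l1 z : ℝ) / ((n : ℝ) + 1)) atTop (𝓝 (1 - 0)) := by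
    apply Tendsto.sub tendsto_const_nhds
    apply Tendsto.div_atTop tendsto_const_nhds
    exact tendsto_atTop_add_const_right _ _ tendsto_natCast_atTop_atTop
  have h2 := (tendsto_const_nhds (x := (0 : ℝ))).max h
  simpa [eta] using h2

lemma eta_diff (n : ℕ) (z : Fin d → ℤ) (i : Fin d) :
    |eta n (z + Pi.single i 1) - eta n z| ≤ 4 / ((l1 z : ℝ) + 2) := by
  obtain ⟨h1, h2⟩ := l1_add_le z i
  have h1' : (l1 (z + Pi.single i 1) : ℝ) ≤ l1 z + 1 := by exact_mod_cast h1
  have h2' : (l1 z : ℝ) ≤ l1 (z + Pi.single i 1) + 1 := by exact_mod_cast h2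
  have hn : (0 : ℝ) ≤ n := Nat.cast_nonneg n
  by_cases hbig : (n : ℝ) + 2 ≤ l1 z
  · have a : eta n z = 0 := by
      unfold eta
      apply max_eq_left
      have : 1 ≤ (l1 z : ℝ) / (n + 1) := by
        rw [le_div_iff₀ (by positivity)]; linarith
      linarith
    have b : eta n (z + Pi.single i 1) = 0 := by
      unfold eta
      apply max_eq_left
      have : 1 ≤ (l1 (z + Pi.single i 1) : ℝ) / (n + 1) := by
        rw [le_div_iff₀ (by positivity)]; linarith
      linarith
    rw [a, b]; simp; positivity
  · push Not at hbig
    have c : |eta n (z + Pi.single i 1) - eta n z| ≤ 1 / ((n : ℝ) + 1) := by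
      unfold eta
      refine (abs_max_sub_max_le_max _ _ _ _).trans (max_le (by simp; positivity) ?_)
      have : 1 - (l1 (z + Pi.single i 1) : ℝ) / (n + 1) - (1 - (l1 z : ℝ) / (n + 1)) =
        ((l1 z : ℝ) - l1 (z + Pi.single i 1)) / (n + 1) := by ring
      rw [this, abs_div, abs_of_pos (by positivity : (0 : ℝ) < (n : ℝ) + 1)]
      gcongr
      rw [abs_le]; constructor <;> linarith
    refine c.trans ?_
    rw [div_le_div_iff₀ (by positivity) (by positivity)]
    linarith

/-- The divergence of a field decaying like `⟨z⟩^{-d}` (up to logs) has zero sum. -/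
lemma div_sum_zero (hd : 1 ≤ d) (α : ℝ) {J : Type*} [Fintype J] (dir : J → Fin d)
    (h : J → (Fin d → ℤ) → ℝ) (B : ℝ) (hh : ∀ j z, |h j z| ≤ B * wt α d (l1 z))
    (hs : Summable (fun z => ∑ j, (h j (z - Pi.single (dir j) 1) - h j z))) :
    ∑' z, ∑ j, (h j (z - Pi.single (dir j) 1) - h j z) = 0 := by
  set D : (Fin d → ℤ) → ℝ := fun z => ∑ j, (h j (z - Pi.single (dir j) 1) - h j z) with hD
  have t1 : Tendsto (fun n : ℕ => ∑' z, eta n z * D z) atTop (𝓝 (∑' z, D z)) := by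
    apply tendsto_tsum_of_dominated_convergence (bound := fun z => ‖D z‖) hs.norm
    · intro z
      simpa using (eta_tendsto z).mul_const (D z)
    · filter_upwards with n z
      rw [norm_mul, Real.norm_eq_abs, abs_of_nonneg (eta_nonneg n z)]
      exact mul_le_of_le_one_left (norm_nonneg _) (eta_le n z)
  have t2 : Tendsto (fun n : ℕ => ∑' z, ∑ j, h j z * (eta n (z + Pi.single (dir j) 1) - eta n z))
      atTop (𝓝 (∑' z : Fin d → ℤ, (0 : ℝ))) := by
    apply tendsto_tsum_of_dominated_convergence
      (bound := fun z => (Fintype.card J : ℝ) * (4 * B) * wt α (d + 1) (l1 z))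
      ((wt_summable hd α (d + 1) le_rfl).mul_left _)
    · intro z
      have : Tendsto (fun n => ∑ j, h j z * (eta n (z + Pi.single (dir j) 1) - eta n z)) atTop
          (𝓝 (∑ j, h j z * (1 - 1))) := by
        apply tendsto_finsetSum
        intro j _
        exact ((eta_tendsto _).sub (eta_tendsto z)).const_mul _
      simpa using this
    · filter_upwards with n z
      calc _ ≤ ∑ j : J, (4 * B) * wt α (d + 1) (l1 z) := by
            apply norm_sum_le_of_le
            intro j _
            rw [norm_mul, Real.norm_eq_abs, Real.norm_eq_abs]
            calc _ ≤ (B * wt α d (l1 z)) * (4 / ((l1 z : ℝ) + 2)) := by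
                  apply mul_le_mul (hh j z) (eta_diff n z _) (abs_nonneg _)
                  exact (abs_nonneg _).trans (hh j z)
              _ = _ := by
                  unfold wt
                  field_simp
                  ring
        _ = _ := by simp [mul_assoc]
  have e : ∀ n : ℕ, ∑' z, eta n z * D z =
      ∑' z, ∑ j, h j z * (eta n (z + Pi.single (dir j) 1) - eta n z) := by
    intro n
    have fin : ∀ u : (Fin d → ℤ) → ℝ, Summable (fun z => eta n z * u z) := fun u =>
      summable_of_hasFiniteSupport (((eta_finite n).subset (fun z hz => by
        intro h0; apply hz; simp [h0])))
    have fin2 : ∀ j, Summable (fun z => h j z * eta n (z + Pi.single (dir j) 1)) := by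
      intro j
      have := (Equiv.addRight (Pi.single (dir j) (1 : ℤ))).summable_iff.2
        (fin (fun z => h j (z - Pi.single (dir j) 1)))
      refine this.congr ?_
      intro z
      simp [mul_comm]
    have sh : ∀ j, ∑' z, eta n z * h j (z - Pi.single (dir j) 1) =
        ∑' z, h j z * eta n (z + Pi.single (dir j) 1) := by
      intro j
      rw [← (Equiv.addRight (Pi.single (dir j) (1 : ℤ))).tsum_eq]
      apply tsum_congr
      intro z
      simp [mul_comm]
    have l : ∀ z, eta n z * D z =
        ∑ j, (eta n z * h j (z - Pi.single (dir j) 1) - eta n z * h j z) := by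
      intro z
      rw [hD, Finset.mul_sum]
      simp only [mul_sub]
    have r : ∀ z, ∑ j, h j z * (eta n (z + Pi.single (dir j) 1) - eta n z) =
        ∑ j, (h j z * eta n (z + Pi.single (dir j) 1) - eta n z * h j z) := by
      intro z
      apply Finset.sum_congr rfl
      intro j _; ring
    simp_rw [l, r]
    rw [Summable.tsum_finsetSum (fun j _ => (fin _).sub (fin _)),
      Summable.tsum_finsetSum (fun j _ => (fin2 j).sub (fin _))]
    apply Finset.sum_congr rfl
    intro j _
    rw [(fin _).tsum_sub (fin _), (fin2 j).tsum_sub (fin _), sh j]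
  simp_rw [e] at t1
  rw [tsum_zero] at t2
  exact tendsto_nhds_unique t1 t2

end

section

variable {d : ℕ}

/-- Symmetrization. -/
def symF (k : ℕ) (f : (Fin d → ℤ) → (Fin k → Fin d) → ℝ) (z : Fin d → ℤ) (σ : Fin k → Fin d) : ℝ :=
  ((k.factorial : ℝ))⁻¹ * ∑ π : Equiv.Perm (Fin k), f z (σ ∘ π)

/-- The iterated fields. -/
def Fs (g0 : (Fin d → ℤ) → ℝ) : (k : ℕ) → (Fin d → ℤ) → (Fin k → Fin d) → ℝ
  | 0 => fun z _ => g0 z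
  | k + 1 => fun z σ =>
      sol (fun y => symF k (Fs g0 k) y (Fin.init σ)) (σ (Fin.last k)) z

lemma Fs_snoc (g0 : (Fin d → ℤ) → ℝ) (k : ℕ) (z : Fin d → ℤ) (σ : Fin k → Fin d) (i : Fin d) :
    Fs g0 (k + 1) z (Fin.snoc σ i) = sol (fun y => symF k (Fs g0 k) y σ) i z := by
  simp only [Fs, Fin.init_snoc, Fin.snoc_last]

/-- Number of occurrences. -/
def typ {k : ℕ} (σ : Fin k → Fin d) (i : Fin d) : ℕ := ∑ m, if σ m = i then 1 else 0

lemma typ_snoc {k : ℕ} (σ : Fin k → Fin d) (j i : Fin d) :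
    typ (Fin.snoc σ j : Fin (k + 1) → Fin d) i = typ σ i + if j = i then 1 else 0 := by
  unfold typ
  rw [Fin.sum_univ_castSucc]
  simp

lemma typ_perm {k : ℕ} (σ : Fin k → Fin d) (π : Equiv.Perm (Fin k)) : typ (σ ∘ π) = typ σ := by
  funext i
  unfold typ
  exact Equiv.sum_comp π (fun m => if σ m = i then 1 else 0)

lemma typ_sum {k : ℕ} (σ : Fin k → Fin d) : ∑ i, typ σ i = k := by
  unfold typ
  rw [Finset.sum_comm]
  simp

lemma exists_perm_of_typ {k : ℕ} (σ τ : Fin k → Fin d) (h : typ σ = typ τ) :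
    ∃ π : Equiv.Perm (Fin k), σ = τ ∘ π := by
  have hc : ∀ c, Nonempty ({a // σ a = c} ≃ {b // τ b = c}) := by
    intro c
    have := congrFun h c
    unfold typ at this
    simp only [Finset.sum_boole] at this
    apply Fintype.card_eq.1
    rw [Fintype.card_subtype, Fintype.card_subtype]
    exact_mod_cast this
  let e := fun c => (hc c).some
  refine ⟨Equiv.ofFiberEquiv e, ?_⟩
  funext a
  exact (Equiv.ofFiberEquiv_map e a).symm

/-- Binomial polynomial. -/
def bq (n : ℕ) (x : ℤ) : ℝ := (∏ t ∈ Finset.range n, ((x : ℝ) - t)) / (n.factorial : ℝ)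

lemma bq_zero (x : ℤ) : bq 0 x = 1 := by simp [bq]

lemma bq_succ (n : ℕ) (x : ℤ) : bq (n + 1) (x + 1) - bq (n + 1) x = bq n x := by
  unfold bq
  have h1 : ∏ t ∈ Finset.range (n + 1), (((x + 1 : ℤ) : ℝ) - t) =
      (∏ t ∈ Finset.range n, ((x : ℝ) - t)) * (x + 1) := by
    rw [Finset.prod_range_succ']
    congr 1
    · apply Finset.prod_congr rfl
      intro t _; push_cast; ring
    · push_cast; ring
  rw [h1, Finset.prod_range_succ, Nat.factorial_succ]
  have : (n.factorial : ℝ) ≠ 0 := by positivity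
  push_cast
  field_simp
  ring

lemma bq_bound (n : ℕ) (x : ℤ) (X : ℝ) (h1 : 1 ≤ X) (hx : (x.natAbs : ℝ) ≤ X) :
    |bq n x| ≤ ((n : ℝ) + 1) ^ n * X ^ n := by
  unfold bq
  rw [abs_div, Finset.abs_prod]
  have hf : (1 : ℝ) ≤ |(n.factorial : ℝ)| := by
    rw [abs_of_nonneg (by positivity)]
    exact_mod_cast Nat.factorial_pos n
  refine (div_le_self (Finset.prod_nonneg fun _ _ => abs_nonneg _) hf).trans ?_
  calc _ ≤ ∏ t ∈ Finset.range n, (((n : ℝ) + 1) * X) := by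
        apply Finset.prod_le_prod
        · intro t _; exact abs_nonneg _
        · intro t ht
          have ht' : (t : ℝ) ≤ n := by exact_mod_cast (Finset.mem_range.1 ht).le
          have hxa : |(x : ℝ)| ≤ X := by
            rwa [← Int.cast_abs, ← Int.natCast_natAbs, Int.cast_natCast]
          calc |(x : ℝ) - t| ≤ |(x : ℝ)| + |(t : ℝ)| := abs_sub _ _
            _ ≤ X + n := by
                have := abs_of_nonneg (Nat.cast_nonneg (α := ℝ) t); linarith
            _ ≤ _ := by nlinarith [Nat.cast_nonneg (α := ℝ) n]
    _ = _ := by rw [Finset.prod_const, Finset.card_range, mul_pow]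

/-- Shifted binomial polynomial, zero when the index is negative. -/
def qq (b t : ℕ) (x : ℤ) : ℝ := if t ≤ b then bq (b - t) x else 0

lemma qq_succ (b t : ℕ) (x : ℤ) : qq b t (x + 1) - qq b t x = qq b (t + 1) x := by
  unfold qq
  rcases lt_trichotomy t b with h | h | h
  · rw [if_pos (by omega), if_pos (by omega), if_pos (by omega)]
    obtain ⟨n, rfl⟩ : ∃ n, b = t + 1 + n := ⟨b - (t + 1), by omega⟩
    rw [show t + 1 + n - t = n + 1 by omega, show t + 1 + n - (t + 1) = n by omega]
    exact bq_succ n x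
  · subst h; simp [bq_zero]
  · rw [if_neg (by omega), if_neg (by omega), if_neg (by omega)]; simp

lemma qq_bound (b t : ℕ) (x : ℤ) (X : ℝ) (h1 : 1 ≤ X) (hx : (x.natAbs : ℝ) ≤ X) :
    |qq b t x| * X ^ t ≤ ((b : ℝ) + 1) ^ b * X ^ b := by
  unfold qq
  split_ifs with h
  · obtain ⟨n, rfl⟩ : ∃ n, b = t + n := ⟨b - t, by omega⟩
    rw [show t + n - t = n by omega]
    calc _ ≤ ((n : ℝ) + 1) ^ n * X ^ n * X ^ t := by
          gcongr
          exact bq_bound n x X h1 hx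
      _ = ((n : ℝ) + 1) ^ n * X ^ (t + n) := by ring
      _ ≤ _ := by
          gcongr
          calc ((n : ℝ) + 1) ^ n ≤ (((t + n : ℕ) : ℝ) + 1) ^ n := by
                gcongr; omega
            _ ≤ _ := by
                apply pow_le_pow_right₀ _ (by omega)
                have := Nat.cast_nonneg (α := ℝ) (t + n)
                linarith
  · simp; positivity

/-- Iterated difference of a product of binomials. -/
def Qp (β : Fin d → ℕ) {k : ℕ} (σ : Fin k → Fin d) (z : Fin d → ℤ) : ℝ :=
  ∏ i, qq (β i) (typ σ i) (z i)

lemma Qp_diff (β : Fin d → ℕ) {k : ℕ} (σ : Fin k → Fin d) (j : Fin d) (z : Fin d → ℤ) :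
    Qp β σ (z + Pi.single j 1) - Qp β σ z = Qp β (Fin.snoc σ j : Fin (k + 1) → Fin d) z := by
  unfold Qp
  rw [prod_shift (fun i x => qq (β i) (typ σ i) x),
    ← Finset.mul_prod_erase Finset.univ (fun i => qq (β i) (typ σ i) (z i)) (Finset.mem_univ j),
    ← Finset.mul_prod_erase Finset.univ (fun i => qq (β i)
      (typ (Fin.snoc σ j : Fin (k + 1) → Fin d) i) (z i)) (Finset.mem_univ j), ← sub_mul, qq_succ]
  congr 1
  · rw [typ_snoc]; simp
  · apply Finset.prod_congr rfl
    intro i hi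
    rw [typ_snoc, if_neg (Finset.ne_of_mem_erase hi).symm, add_zero]

/-- Constant in the growth bound. -/
def qc (β : Fin d → ℕ) : ℝ := ∏ i, ((β i : ℝ) + 1) ^ (β i)

lemma qc_nonneg (β : Fin d → ℕ) : 0 ≤ qc β := Finset.prod_nonneg fun _ _ => by positivity

lemma Qp_bound (β : Fin d → ℕ) {k : ℕ} (σ : Fin k → Fin d) (z : Fin d → ℤ) :
    |Qp β σ z| * ((l1 z : ℝ) + 2) ^ k ≤ qc β * ((l1 z : ℝ) + 2) ^ (∑ i, β i) := by
  have e : ((l1 z : ℝ) + 2) ^ k = ∏ i, ((l1 z : ℝ) + 2) ^ (typ σ i) := by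
    rw [Finset.prod_pow_eq_pow_sum, typ_sum]
  rw [e, ← Finset.prod_pow_eq_pow_sum]
  unfold Qp qc
  rw [Finset.abs_prod, ← Finset.prod_mul_distrib, ← Finset.prod_mul_distrib]
  have h0 := Nat.cast_nonneg (α := ℝ) (l1 z)
  apply Finset.prod_le_prod
  · intro i _; positivity
  · intro i _
    apply qq_bound _ _ _ _ (by linarith)
    have : ((z i).natAbs : ℝ) ≤ l1 z := by exact_mod_cast natAbs_le_l1 z i
    linarith

lemma Qp_top (β : Fin d → ℕ) {k : ℕ} (σ : Fin k → Fin d) (z : Fin d → ℤ) (h : ∑ i, β i = k) :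
    Qp β σ z = if typ σ = β then 1 else 0 := by
  split_ifs with e
  · unfold Qp
    rw [e]; simp [qq, bq_zero]
  · have : ∃ i, β i < typ σ i := by
      by_contra hcon
      push Not at hcon
      apply e
      have := (Finset.sum_eq_sum_iff_of_le (s := Finset.univ) (fun i _ => hcon i)).1
        (by rw [typ_sum, h])
      funext i
      exact this i (Finset.mem_univ i)
    obtain ⟨i, hi⟩ := this
    apply Finset.prod_eq_zero (Finset.mem_univ i)
    unfold qq
    rw [if_neg (by omega)]

lemma wt_mul_bound (α : ℝ) {u v c e : ℝ} {m j b n r : ℕ}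
    (hu : |u| ≤ c * wt α m r) (hv : |v| * ((r : ℝ) + 2) ^ j ≤ e * ((r : ℝ) + 2) ^ b)
    (h : n + b ≤ m + j) : |u * v| ≤ c * e * wt α n r := by
  have hr : (2 : ℝ) ≤ (r : ℝ) + 2 := by have := Nat.cast_nonneg (α := ℝ) r; linarith
  have hc : 0 ≤ c := nonneg_of_mul_nonneg_left ((abs_nonneg _).trans hu) (wt_pos _ _ _)
  have he : 0 ≤ e := nonneg_of_mul_nonneg_left (le_trans (by positivity) hv) (by positivity)
  have hl := log_pos_aux hr
  unfold wt at *
  obtain ⟨X, hX⟩ : ∃ X, X = (r : ℝ) + 2 := ⟨_, rfl⟩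
  rw [← hX] at hu hv hr hl ⊢
  have hX0 : 0 < X := by linarith
  have hv' : |v| ≤ e * X ^ b / X ^ j := by rwa [le_div_iff₀ (by positivity)]
  rw [abs_mul]
  calc |u| * |v| ≤ (c * (Real.log X ^ α / X ^ m)) * (e * X ^ b / X ^ j) := by
        gcongr
    _ = c * e * (Real.log X ^ α * (X ^ b / X ^ (m + j))) := by
        rw [pow_add]; field_simp
    _ ≤ c * e * (Real.log X ^ α * (1 / X ^ n)) := by
        gcongr c * e * (Real.log X ^ α * ?_)
        rw [div_le_div_iff₀ (by positivity) (by positivity), one_mul, ← pow_add]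
        apply pow_le_pow_right₀ (by linarith)
        omega
    _ = _ := by ring

lemma symF_perm {k : ℕ} (f : (Fin d → ℤ) → (Fin k → Fin d) → ℝ) (z : Fin d → ℤ)
    (σ : Fin k → Fin d) (π : Equiv.Perm (Fin k)) : symF k f z (σ ∘ π) = symF k f z σ := by
  unfold symF
  congr 1
  rw [← Equiv.sum_comp (Equiv.mulLeft π) (fun ρ => f z (σ ∘ ρ))]
  rfl

lemma symF_contract {k : ℕ} (f : (Fin d → ℤ) → (Fin k → Fin d) → ℝ) (z : Fin d → ℤ)
    (Q : (Fin k → Fin d) → ℝ) (hQ : ∀ σ (π : Equiv.Perm (Fin k)), Q (σ ∘ π) = Q σ) :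
    ∑ σ, f z σ * Q σ = ∑ σ, symF k f z σ * Q σ := by
  unfold symF
  simp_rw [mul_assoc, ← Finset.mul_sum, Finset.sum_mul]
  rw [Finset.sum_comm]
  have : ∀ π : Equiv.Perm (Fin k), ∑ σ : Fin k → Fin d, f z (σ ∘ π) * Q σ = ∑ σ, f z σ * Q σ := by
    intro π
    rw [← Equiv.sum_comp (Equiv.arrowCongr π.symm (Equiv.refl (Fin d))) (fun σ => f z σ * Q σ)]
    apply Finset.sum_congr rfl
    intro σ _
    have e : (Equiv.arrowCongr π.symm (Equiv.refl (Fin d))) σ = σ ∘ π := by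
      funext m; simp
    rw [e, hQ]
  rw [Finset.sum_congr rfl (fun π _ => this π)]
  simp only [Finset.sum_const, Finset.card_univ, Fintype.card_perm, Fintype.card_fin, nsmul_eq_mul]
  have : (k.factorial : ℝ) ≠ 0 := by positivity
  field_simp

lemma symF_bound {k : ℕ} (f : (Fin d → ℤ) → (Fin k → Fin d) → ℝ) (z : Fin d → ℤ) (b : ℝ)
    (h : ∀ σ, |f z σ| ≤ b) (σ : Fin k → Fin d) : |symF k f z σ| ≤ b := by
  unfold symF
  have hk : (0 : ℝ) < k.factorial := by positivity
  rw [abs_mul, abs_of_pos (inv_pos.2 hk), inv_mul_le_iff₀ hk]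
  refine (Finset.abs_sum_le_sum_abs _ _).trans ?_
  refine (Finset.sum_le_sum fun π _ => h _).trans ?_
  simp [Fintype.card_perm]

lemma sum_snoc {k : ℕ} (f : (Fin (k + 1) → Fin d) → ℝ) :
    ∑ σ, f σ = ∑ x : (Fin k → Fin d) × Fin d, f (Fin.snoc x.1 x.2) := by
  rw [← Equiv.sum_comp (Fin.snocEquiv (fun _ : Fin (k + 1) => Fin d)) f,
    ← Equiv.sum_comp (Equiv.prodComm _ _)]
  rfl

theorem scalar_main (hd : 1 ≤ d) (p q : ℕ) (hq : d + p ≤ q) (α : ℝ) (k : ℕ) (hk : k ≤ p) :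
    ∃ C : ℝ, 0 < C ∧ ∀ (B : ℝ) (g0 : (Fin d → ℤ) → ℝ),
      (∀ z, |g0 z| ≤ B * wt α q (l1 z)) →
      (∀ β : Fin d → ℕ, ∑ i, β i < p → HasSum (fun z => g0 z * ∏ i, bq (β i) (z i)) 0) →
      (∀ z σ, |Fs g0 k z σ| ≤ C * B * wt α (q - k) (l1 z)) ∧
      (∀ β : Fin d → ℕ, ∑ i, β i < p →
        HasSum (fun z => ∑ σ, Fs g0 k z σ * Qp β σ z) 0) ∧
      (∀ j < k, ∀ z σ, symF j (Fs g0 j) z σ =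
        ∑ i, (Fs g0 (j + 1) (z - Pi.single i 1) (Fin.snoc σ i) -
          Fs g0 (j + 1) z (Fin.snoc σ i))) := by
  induction k with
  | zero =>
    refine ⟨1, one_pos, fun B g0 hb hm => ⟨?_, ?_, ?_⟩⟩
    · intro z σ; simpa [Fs] using hb z
    · intro β hβ
      refine (hm β hβ).congr_fun ?_
      intro z
      simp [Fs, Qp, qq, typ]
    · intro j hj; omega
  | succ k ih =>
    obtain ⟨C, hC, ih⟩ := ih (by omega)
    obtain ⟨C', hC', hsol⟩ := sol_spec hd α (q - k) (by omega)
    refine ⟨C' * C, by positivity, fun B g0 hb hm => ?_⟩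
    obtain ⟨hbd, hmom, hdiv⟩ := ih B g0 hb hm
    have sumzero : ∀ σ, HasSum (fun z => symF k (Fs g0 k) z σ) 0 := by
      intro σ0
      have h1 := hmom (typ σ0) (by rw [typ_sum]; omega)
      have h2 : ∀ z, ∑ σ, Fs g0 k z σ * Qp (typ σ0) σ z =
          ((Finset.univ.filter (fun σ : Fin k → Fin d => typ σ = typ σ0)).card : ℝ) *
            symF k (Fs g0 k) z σ0 := by
        intro z
        rw [symF_contract _ _ (fun σ => Qp (typ σ0) σ z)
          (fun σ π => by unfold Qp; rw [typ_perm])]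
        have : ∀ σ, symF k (Fs g0 k) z σ * Qp (typ σ0) σ z =
            if typ σ = typ σ0 then symF k (Fs g0 k) z σ0 else 0 := by
          intro σ
          rw [Qp_top _ _ _ (typ_sum σ0)]
          split_ifs with h
          · obtain ⟨π, hπ⟩ := exists_perm_of_typ σ σ0 h
            rw [hπ, symF_perm, mul_one]
          · simp
        rw [Finset.sum_congr rfl (fun σ _ => this σ), ← Finset.sum_filter, Finset.sum_const,
          nsmul_eq_mul]
      simp_rw [h2] at h1
      have hne : ((Finset.univ.filter (fun σ : Fin k → Fin d => typ σ = typ σ0)).card : ℝ) ≠ 0 := by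
        have : 0 < (Finset.univ.filter (fun σ : Fin k → Fin d => typ σ = typ σ0)).card :=
          Finset.card_pos.2 ⟨σ0, by simp⟩
        exact_mod_cast this.ne'
      rw [← mul_zero ((Finset.univ.filter
        (fun σ : Fin k → Fin d => typ σ = typ σ0)).card : ℝ)] at h1
      exact (hasSum_mul_left_iff hne).1 h1
    have spec := fun σ => hsol (C * B) (fun y => symF k (Fs g0 k) y σ)
      (fun z => symF_bound _ _ _ (hbd z) σ) (sumzero σ)
    have hbd' : ∀ z σ, |Fs g0 (k + 1) z σ| ≤ C' * C * B * wt α (q - (k + 1)) (l1 z) := by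
      intro z σ
      have := (spec (Fin.init σ)).2 (σ (Fin.last k)) z
      rw [show q - (k + 1) = q - k - 1 by omega, mul_assoc C']
      exact this
    have hdiv' : ∀ z σ, symF k (Fs g0 k) z σ =
        ∑ i, (Fs g0 (k + 1) (z - Pi.single i 1) (Fin.snoc σ i) -
          Fs g0 (k + 1) z (Fin.snoc σ i)) := by
      intro z σ
      simp_rw [Fs_snoc]
      exact (spec σ).1 z
    refine ⟨hbd', ?_, ?_⟩
    · intro β hβ
      have hk0 := hmom β hβ
      let T : (Fin d → ℤ) → ℝ := fun z => ∑ σ, Fs g0 (k + 1) z σ * Qp β σ z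
      have hT : Summable T := by
        apply summable_sum
        intro σ _
        refine Summable.of_norm_bounded
          ((wt_summable hd α (d + 1) le_rfl).mul_left (C' * C * B * qc β)) ?_
        intro z
        rw [Real.norm_eq_abs]
        exact wt_mul_bound α (hbd' z σ) (Qp_bound β σ z) (by omega)
      let h : (Fin k → Fin d) × Fin d → (Fin d → ℤ) → ℝ := fun x z =>
        Fs g0 (k + 1) z (Fin.snoc x.1 x.2) * Qp β x.1 (z + Pi.single x.2 1)
      have hh : ∀ x z, |h x z| ≤ (C' * C * B * (2 * qc β)) * wt α d (l1 z) := by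
        intro x z
        refine wt_mul_bound α (j := k) (b := ∑ i, β i) (hbd' z _) ?_ (by omega)
        have e := Qp_diff β x.1 x.2 z
        have e2 : Qp β x.1 (z + Pi.single x.2 1) =
            Qp β x.1 z + Qp β (Fin.snoc x.1 x.2 : Fin (k + 1) → Fin d) z := by linarith
        have b1 := Qp_bound β x.1 z
        have b2 := Qp_bound β (Fin.snoc x.1 x.2 : Fin (k + 1) → Fin d) z
        have hX : (1 : ℝ) ≤ (l1 z : ℝ) + 2 := by
          have := Nat.cast_nonneg (α := ℝ) (l1 z); linarith
        have b3 : |Qp β (Fin.snoc x.1 x.2 : Fin (k + 1) → Fin d) z| * ((l1 z : ℝ) + 2) ^ k ≤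
            |Qp β (Fin.snoc x.1 x.2 : Fin (k + 1) → Fin d) z| * ((l1 z : ℝ) + 2) ^ (k + 1) := by
          gcongr
          omega
        rw [e2]
        calc _ ≤ (|Qp β x.1 z| + |Qp β (Fin.snoc x.1 x.2 : Fin (k + 1) → Fin d) z|) *
              ((l1 z : ℝ) + 2) ^ k := by
              gcongr
              exact abs_add_le _ _
          _ ≤ _ := by rw [add_mul]; linarith
      have id1 : ∀ z, ∑ x : (Fin k → Fin d) × Fin d, (h x (z - Pi.single x.2 1) - h x z) =
          ∑ σ, Fs g0 k z σ * Qp β σ z - T z := by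
        intro z
        rw [symF_contract _ _ (fun σ => Qp β σ z) (fun σ π => by unfold Qp; rw [typ_perm])]
        simp_rw [hdiv']
        simp only [T]
        rw [sum_snoc]
        simp_rw [Finset.sum_mul]
        rw [← Finset.sum_product', Finset.univ_product_univ, ← Finset.sum_sub_distrib]
        apply Finset.sum_congr rfl
        intro x _
        simp only [h]
        rw [← Qp_diff, sub_add_cancel]
        ring
      have hS : Summable (fun z => ∑ x : (Fin k → Fin d) × Fin d,
          (h x (z - Pi.single x.2 1) - h x z)) := by
        simp_rw [id1]
        exact hk0.summable.sub hT
      have hz := div_sum_zero hd α (fun x : (Fin k → Fin d) × Fin d => x.2) h _ hh hS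
      simp_rw [id1] at hz
      rw [hk0.summable.tsum_sub hT, hk0.tsum_eq] at hz
      have : ∑' z, T z = 0 := by linarith
      rw [← this]
      exact hT.hasSum
    · intro j hj z σ
      rcases Nat.lt_succ_iff_lt_or_eq.1 hj with h | h
      · exact hdiv j h z σ
      · subst h; exact hdiv' z σ

end

section

lemma sum_sq_le_sq {ι : Type*} (t : Finset ι) (f : ι → ℝ) :
    ∑ i ∈ t, f i ^ 2 ≤ (∑ i ∈ t, |f i|) ^ 2 := by
  classical
  induction t using Finset.induction_on with
  | empty => simp
  | insert a t ha ih =>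
    rw [Finset.sum_insert ha, Finset.sum_insert ha]
    have h1 : 0 ≤ ∑ i ∈ t, |f i| := Finset.sum_nonneg fun _ _ => abs_nonneg _
    have h2 := abs_nonneg (f a)
    have h3 := sq_abs (f a)
    nlinarith [mul_nonneg h1 h2]

lemma sqrt_sum_sq_le {ι : Type*} (t : Finset ι) (f : ι → ℝ) :
    Real.sqrt (∑ i ∈ t, f i ^ 2) ≤ ∑ i ∈ t, |f i| :=
  (Real.sqrt_le_sqrt (sum_sq_le_sq t f)).trans_eq
    (Real.sqrt_sq (Finset.sum_nonneg fun _ _ => abs_nonneg _))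

lemma abs_le_enorm {n : ℕ} (v : Vec n) (i : Fin n) : |v i| ≤ enorm v :=
  Real.abs_le_sqrt (Finset.single_le_sum (f := fun i => v i ^ 2)
    (fun i _ => sq_nonneg (v i)) (Finset.mem_univ i))

lemma enorm_nonneg {n : ℕ} (v : Vec n) : 0 ≤ enorm v := Real.sqrt_nonneg _

/-- Integer combination of the basis. -/
def lS {d : ℕ} (s : Fin d → Vec d) (z : Fin d → ℤ) : Vec d := ∑ i, (z i : ℝ) • s i

lemma lS_apply {d : ℕ} (s : Fin d → Vec d) (z : Fin d → ℤ) (j : Fin d) :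
    lS s z j = ∑ i, (z i : ℝ) * s i j := by
  simp [lS, Finset.sum_apply]

lemma lS_sub {d : ℕ} (s : Fin d → Vec d) (z : Fin d → ℤ) (i : Fin d) :
    lS s z - s i = lS s (z - Pi.single i 1) := by
  have : s i = ∑ j, ((Pi.single i (1 : ℤ) : Fin d → ℤ) j : ℝ) • s j := by
    rw [Finset.sum_eq_single i]
    · simp
    · intro j _ hj; simp [Pi.single_eq_of_ne hj]
    · simp
  unfold lS
  conv_lhs => rw [this]
  rw [← Finset.sum_sub_distrib]
  apply Finset.sum_congr rfl
  intro j _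
  rw [← sub_smul]; simp

lemma exists_dual {d : ℕ} (s : Fin d → Vec d) (hs : LinearIndependent ℝ s) :
    ∃ R : Fin d → Fin d → ℝ, ∀ z k, (z k : ℝ) = ∑ j, R k j * lS s z j := by
  have hu : IsUnit (Matrix.of s) := by
    rw [← Matrix.linearIndependent_rows_iff_isUnit]; exact hs
  obtain ⟨T, hT⟩ := hu.exists_right_inv
  refine ⟨fun k j => T j k, fun z k => ?_⟩
  have h1 : ∀ i, ∑ j, s i j * T j k = if i = k then 1 else 0 := by
    intro i
    have := congrFun (congrFun hT i) k
    rw [Matrix.mul_apply, Matrix.one_apply] at this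
    exact this
  simp_rw [lS_apply, Finset.mul_sum]
  rw [Finset.sum_comm]
  have : ∀ i, ∑ j, T j k * ((z i : ℝ) * s i j) = (z i : ℝ) * if i = k then 1 else 0 := by
    intro i
    rw [← h1, Finset.mul_sum]
    exact Finset.sum_congr rfl fun j _ => by ring
  simp_rw [this]
  simp

lemma lS_inj {d : ℕ} (s : Fin d → Vec d) (hs : LinearIndependent ℝ s) :
    Function.Injective (lS s) := by
  obtain ⟨R, hR⟩ := exists_dual s hs
  intro z z' h
  funext k
  have := hR z k
  rw [h, ← hR z' k] at this
  exact_mod_cast this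

lemma l1_cast {d : ℕ} (z : Fin d → ℤ) : (l1 z : ℝ) = ∑ i, |(z i : ℝ)| := by
  unfold l1
  push_cast
  apply Finset.sum_congr rfl
  intro i _
  rw [← Int.cast_natCast, Int.natCast_natAbs, Int.cast_abs]

lemma norm_cmp {d : ℕ} (s : Fin d → Vec d) (hs : LinearIndependent ℝ s) :
    ∃ M : ℝ, 1 ≤ M ∧ ∀ z, ang (lS s z) ≤ M * ((l1 z : ℝ) + 2) ∧
      (l1 z : ℝ) + 2 ≤ M * ang (lS s z) := by
  obtain ⟨R, hR⟩ := exists_dual s hs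
  let M1 : ℝ := ∑ i, ∑ j, |s i j|
  let M2 : ℝ := ∑ i, ∑ j, |R i j|
  have h1 : 0 ≤ M1 := Finset.sum_nonneg fun _ _ => Finset.sum_nonneg fun _ _ => abs_nonneg _
  have h2 : 0 ≤ M2 := Finset.sum_nonneg fun _ _ => Finset.sum_nonneg fun _ _ => abs_nonneg _
  refine ⟨1 + M1 + M2, by linarith, fun z => ?_⟩
  have hl : (0 : ℝ) ≤ l1 z := Nat.cast_nonneg _
  have he := enorm_nonneg (lS s z)
  have hz : ∀ i, |(z i : ℝ)| ≤ l1 z := by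
    intro i
    rw [l1_cast]
    exact Finset.single_le_sum (f := fun i => |(z i : ℝ)|) (fun _ _ => abs_nonneg _)
      (Finset.mem_univ i)
  have a1 : enorm (lS s z) ≤ M1 * l1 z := by
    refine (sqrt_sum_sq_le _ _).trans ?_
    calc ∑ j, |lS s z j| ≤ ∑ j, ∑ i, |s i j| * l1 z := by
          apply Finset.sum_le_sum
          intro j _
          rw [lS_apply]
          refine (Finset.abs_sum_le_sum_abs _ _).trans ?_
          apply Finset.sum_le_sum
          intro i _
          rw [abs_mul, mul_comm]
          exact mul_le_mul_of_nonneg_left (hz i) (abs_nonneg _)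
      _ = _ := by
          rw [Finset.sum_comm]
          simp_rw [M1, Finset.sum_mul]
  have a2 : (l1 z : ℝ) ≤ M2 * enorm (lS s z) := by
    rw [l1_cast]
    calc _ ≤ ∑ i, ∑ j, |R i j| * enorm (lS s z) := by
          apply Finset.sum_le_sum
          intro i _
          rw [hR z i]
          refine (Finset.abs_sum_le_sum_abs _ _).trans ?_
          apply Finset.sum_le_sum
          intro j _
          rw [abs_mul]
          exact mul_le_mul_of_nonneg_left (abs_le_enorm _ _) (abs_nonneg _)
      _ = _ := by simp_rw [M2, Finset.sum_mul]
  unfold ang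
  constructor
  · nlinarith [mul_nonneg h2 hl]
  · nlinarith [mul_nonneg h1 he]

lemma wt_cmp (α : ℝ) (m : ℕ) (M : ℝ) (hM : 1 ≤ M) :
    ∃ K : ℝ, 0 < K ∧ ∀ a b : ℝ, 2 ≤ a → 2 ≤ b → a ≤ M * b → b ≤ M * a →
      Real.log a ^ α / a ^ m ≤ K * (Real.log b ^ α / b ^ m) := by
  have l2 : 0 < Real.log 2 := log_pos_aux le_rfl
  have lM : 0 ≤ Real.log M := Real.log_nonneg hM
  obtain ⟨κ, hκ⟩ : ∃ κ, κ = 1 + Real.log M / Real.log 2 := ⟨_, rfl⟩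
  have hκ0 : 0 < κ := by rw [hκ]; positivity
  have key : ∀ a b : ℝ, 2 ≤ a → 2 ≤ b → a ≤ M * b → Real.log a ≤ κ * Real.log b := by
    intro a b ha hb h
    have h1 : Real.log a ≤ Real.log M + Real.log b := by
      rw [← Real.log_mul (by linarith) (by linarith)]
      exact Real.log_le_log (by linarith) h
    have h2 : Real.log 2 ≤ Real.log b := Real.log_le_log (by norm_num) hb
    have h3 : Real.log M ≤ Real.log M / Real.log 2 * Real.log b := by
      rw [div_mul_eq_mul_div, le_div_iff₀ l2]
      exact mul_le_mul_of_nonneg_left h2 lM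
    rw [hκ]; linarith
  refine ⟨κ ^ |α| * M ^ m, by positivity, ?_⟩
  intro a b ha hb h1 h2
  have la := log_pos_aux ha
  have lb := log_pos_aux hb
  have hl : Real.log a ^ α ≤ κ ^ |α| * Real.log b ^ α := by
    rcases le_total 0 α with h | h
    · rw [abs_of_nonneg h, ← Real.mul_rpow hκ0.le lb.le]
      exact Real.rpow_le_rpow la.le (key a b ha hb h1) h
    · rw [abs_of_nonpos h, Real.rpow_neg hκ0.le, ← div_eq_inv_mul,
        ← Real.div_rpow lb.le hκ0.le]
      apply Real.rpow_le_rpow_of_nonpos (by positivity) _ h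
      rw [div_le_iff₀ hκ0, mul_comm]
      exact key b a hb ha h2
  have hm : 1 / a ^ m ≤ M ^ m * (1 / b ^ m) := by
    rw [mul_one_div, div_le_div_iff₀ (by positivity) (by positivity), one_mul, ← mul_pow]
    exact pow_le_pow_left₀ (by linarith) h2 m
  calc _ = Real.log a ^ α * (1 / a ^ m) := by ring
    _ ≤ (κ ^ |α| * Real.log b ^ α) * (M ^ m * (1 / b ^ m)) := by
        gcongr
    _ = _ := by ring

lemma affine_moments {d : ℕ} {ι κ : Type*} (p : ℕ) (g : ι → ℝ) (x : ι → Fin d → ℝ)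
    (H : ∀ j < p, ∀ js : Fin j → Fin d, HasSum (fun z => g z * ∏ m, x z (js m)) 0)
    (c : κ → Fin d → ℝ) (b : κ → ℝ) (T : Finset κ) :
    ∀ (j : ℕ) (js : Fin j → Fin d), T.card + j < p →
      HasSum (fun z => g z * (∏ m, x z (js m)) * ∏ t ∈ T, (∑ i, c t i * x z i - b t)) 0 := by
  classical
  induction T using Finset.induction_on with
  | empty =>
    intro j js h
    simpa using H j (by simpa using h) js
  | insert a T ha ih =>
    intro j js h
    rw [Finset.card_insert_of_notMem ha] at h
    have h1 := hasSum_sum (s := Finset.univ) (fun (i : Fin d) _ =>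
      (ih (j + 1) (Fin.cons i js) (by omega)).mul_left (c a i))
    have h2 := (ih j js (by omega)).mul_left (b a)
    have h3 := h1.sub h2
    simp only [mul_zero, Finset.sum_const_zero, sub_zero] at h3
    have e : (fun z => g z * (∏ m, x z (js m)) *
        ∏ t ∈ insert a T, (∑ i, c t i * x z i - b t)) = fun z =>
        ∑ i, c a i * ((g z * ∏ m, x z ((Fin.cons i js : Fin (j + 1) → Fin d) m)) *
          ∏ t ∈ T, (∑ i, c t i * x z i - b t)) -
        b a * ((g z * ∏ m, x z (js m)) * ∏ t ∈ T, (∑ i, c t i * x z i - b t)) := by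
      funext z
      rw [Finset.prod_insert ha]
      simp_rw [Fin.prod_univ_succ, Fin.cons_zero, Fin.cons_succ]
      rw [sub_mul, mul_sub, Finset.sum_mul, Finset.mul_sum]
      congr 1
      · apply Finset.sum_congr rfl
        intro i _
        ring
      · ring
    rw [e]
    exact h3

lemma bq_moments {d : ℕ} {ι : Type*} (p : ℕ) (g : ι → ℝ) (x : ι → Fin d → ℝ)
    (H : ∀ j < p, ∀ js : Fin j → Fin d, HasSum (fun z => g z * ∏ m, x z (js m)) 0)
    (R : Fin d → Fin d → ℝ) (w : ι → Fin d → ℤ) (hw : ∀ z k, (w z k : ℝ) = ∑ j, R k j * x z j)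
    (β : Fin d → ℕ) (hβ : ∑ i, β i < p) :
    HasSum (fun z => g z * ∏ i, bq (β i) (w z i)) 0 := by
  have h := affine_moments p g x H (κ := Σ i, Fin (β i)) (fun t => R t.1) (fun t => (t.2 : ℕ))
    Finset.univ 0 Fin.elim0 (by simpa using hβ)
  have h' := h.mul_right (∏ i, ((β i).factorial : ℝ))⁻¹
  rw [zero_mul] at h'
  suffices e : ∀ z, g z * ∏ i, bq (β i) (w z i) = g z * (∏ m : Fin 0, x z (Fin.elim0 m)) *
      (∏ t : (Σ i, Fin (β i)), (∑ i, R t.1 i * x z i - ((t.2 : ℕ) : ℝ))) *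
      (∏ i, ((β i).factorial : ℝ))⁻¹ by
    simp_rw [e]
    exact h'
  intro z
  unfold bq
  rw [Finset.prod_div_distrib, Fintype.prod_sigma]
  simp only [← hw, Finset.univ_eq_empty, Finset.prod_empty, mul_one, Finset.prod_range]
  rw [mul_assoc, div_eq_mul_inv]

end

lemma exists_reindex {d : ℕ} (A : Matrix (Fin d) (Fin d) ℝ) (hA : IsUnit A.det)
    (s : Fin d → Vec d) (hslat : ∀ i, s i ∈ Lattice d A)
    (hsind : LinearIndependent ℝ s)
    (hsspan : ∀ x ∈ Lattice d A, ∃ z : Fin d → ℤ, x = ∑ i, (z i : ℝ) • s i) :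
    ∃ e : (Fin d → ℤ) ≃ (Fin d → ℤ), ∀ z, latticePt d A z = lS s (e z) := by
  have hinj : Function.Injective (latticePt d A) := by
    intro z z' h
    have hu := (Matrix.mulVec_injective_iff_isUnit (A := A)).2
      ((Matrix.isUnit_iff_isUnit_det A).2 hA)
    have h2 : (fun j => (z j : ℝ)) = fun j => (z' j : ℝ) := hu h
    funext j
    exact_mod_cast congrFun h2 j
  choose e he using fun z => hsspan (latticePt d A z) ⟨z, rfl⟩
  choose w hw using hslat
  have hb : Function.Bijective e := by
    constructor
    · intro z z' h
      apply hinj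
      rw [he, he z', h]
    · intro z'
      refine ⟨∑ i, z' i • w i, lS_inj s hsind ?_⟩
      unfold lS
      rw [← he]
      funext j
      simp only [latticePt, Finset.sum_apply, Pi.smul_apply, smul_eq_mul]
      simp_rw [← hw]
      simp only [latticePt]
      push_cast
      simp_rw [Finset.mul_sum]
      rw [Finset.sum_comm]
      apply Finset.sum_congr rfl
      intro i _
      apply Finset.sum_congr rfl
      intro k _
      ring
  exact ⟨Equiv.ofBijective e hb, fun z => he z⟩

/-- Proposition: conversion to higher-order divergence
form. -/
theorem conversion_to_higher_order_divergence_form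
    (d N : ℕ) (hd : 2 ≤ d)
    (A : Matrix (Fin d) (Fin d) ℝ) (hA : IsUnit A.det)
    (s : Fin d → Vec d) (hslat : ∀ i, s i ∈ Lattice d A)
    (hsind : LinearIndependent ℝ s)
    (hsspan : ∀ x ∈ Lattice d A, ∃ z : Fin d → ℤ, x = ∑ i, (z i : ℝ) • s i)
    (p q : ℕ) (hp : 1 ≤ p) (hq : d + p < q + 1) (α : ℝ) :
    ∃ C : ℝ, ∀ (Cf : ℝ) (f0 : Vec d → Vec N),
      (∀ z : Fin d → ℤ,
        enorm (f0 (latticePt d A z)) ≤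
          Cf * ang (latticePt d A z) ^ (-(q : ℝ)) *
            Real.log (ang (latticePt d A z)) ^ α) →
      (∀ j : ℕ, j < p → ∀ (a : Fin N) (js : Fin j → Fin d),
        HasSum (fun z : Fin d → ℤ =>
          f0 (latticePt d A z) a * ∏ m, latticePt d A z (js m)) 0) →
      ∃ F : (k : ℕ) → Vec d → Fin N → (Fin k → Fin d) → ℝ,
        -- `F 0` is `f⁽⁰⁾`
        (∀ (z : Fin d → ℤ) (a : Fin N) (js : Fin 0 → Fin d),
          F 0 (latticePt d A z) a js = f0 (latticePt d A z) a) ∧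
        -- `sym f⁽ᵏ⁻¹⁾ = −Div_𝒮 f⁽ᵏ⁾`
        (∀ k : ℕ, k < p → ∀ (z : Fin d → ℤ) (a : Fin N) (σv : Fin k → Fin d),
          ((k.factorial : ℝ))⁻¹ *
              (∑ π : Equiv.Perm (Fin k), F k (latticePt d A z) a (σv ∘ π)) =
            ∑ i : Fin d,
              (F (k + 1) (latticePt d A z - s i) a (Fin.snoc σv i) -
                F (k + 1) (latticePt d A z) a (Fin.snoc σv i))) ∧
        -- decay of `f⁽ᵏ⁾`
        (∀ k : ℕ, 1 ≤ k → k ≤ p → ∀ z : Fin d → ℤ,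
          Real.sqrt (∑ a : Fin N, ∑ σv : Fin k → Fin d,
              (F k (latticePt d A z) a σv) ^ 2) ≤
            C * Cf * ang (latticePt d A z) ^ (-(q : ℝ) + k) *
              Real.log (ang (latticePt d A z)) ^ α) := by
  obtain ⟨e, he⟩ := exists_reindex A hA s hslat hsind hsspan
  obtain ⟨R, hR⟩ := exists_dual s hsind
  obtain ⟨M, hM, hcmp⟩ := norm_cmp s hsind
  have hinj := lS_inj s hsind
  obtain ⟨K1, hK1, hcmp1⟩ := wt_cmp α q M hM
  have hsm : ∀ k : ℕ, ∃ Ck : ℝ, 0 < Ck ∧ (k ≤ p → ∀ (B : ℝ) (g0 : (Fin d → ℤ) → ℝ),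
      (∀ z, |g0 z| ≤ B * wt α q (l1 z)) →
      (∀ β : Fin d → ℕ, ∑ i, β i < p → HasSum (fun z => g0 z * ∏ i, bq (β i) (z i)) 0) →
      (∀ z σ, |Fs g0 k z σ| ≤ Ck * B * wt α (q - k) (l1 z))) := by
    intro k
    by_cases hk : k ≤ p
    · obtain ⟨C, hC, h⟩ := scalar_main (d := d) (by omega) p q (by omega) α k hk
      exact ⟨C, hC, fun _ B g0 h1 h2 => (h B g0 h1 h2).1⟩
    · exact ⟨1, one_pos, fun h => absurd h hk⟩
  choose Ck hCk hbd using hsm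
  choose K2 hK2 hcmp2 using fun k : ℕ => wt_cmp α (q - k) M hM
  obtain ⟨Cp, -, hdiv⟩ := scalar_main (d := d) (by omega) p q (by omega) α p le_rfl
  let CC : ℕ → ℝ := fun k => (N : ℝ) * (Fintype.card (Fin k → Fin d) : ℝ) * (Ck k * K1 * K2 k)
  have hCC : ∀ k, 0 ≤ CC k := fun k => by
    have := hCk k
    have := hK2 k
    positivity
  have ha2 : ∀ x : Vec d, 2 ≤ ang x := fun x => by
    have := enorm_nonneg x
    unfold ang; linarith
  have hl2 : ∀ z : Fin d → ℤ, (2 : ℝ) ≤ (l1 z : ℝ) + 2 := fun z => by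
    have := Nat.cast_nonneg (α := ℝ) (l1 z)
    linarith
  refine ⟨∑ k ∈ Finset.range (p + 1), CC k, fun Cf f0 hf hmom => ?_⟩
  have hCf : 0 ≤ Cf := by
    have h0 := (enorm_nonneg _).trans (hf 0)
    rw [mul_assoc] at h0
    have h1 := ha2 (latticePt d A 0)
    have h2 := log_pos_aux h1
    have h3 : 0 < ang (latticePt d A 0) := by linarith
    exact nonneg_of_mul_nonneg_left h0 (by positivity)
  let g : Fin N → (Fin d → ℤ) → ℝ := fun a z => f0 (lS s z) a
  have hg : ∀ a z, |g a z| ≤ (Cf * K1) * wt α q (l1 z) := by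
    intro a z
    obtain ⟨y, rfl⟩ := e.surjective z
    have h1 := hf y
    rw [he] at h1
    have h3 : 0 < ang (lS s (e y)) := by have := ha2 (lS s (e y)); linarith
    rw [Real.rpow_neg h3.le, Real.rpow_natCast] at h1
    refine (abs_le_enorm (f0 (lS s (e y))) a).trans (h1.trans ?_)
    have h4 := hcmp1 _ _ (ha2 (lS s (e y))) (hl2 (e y)) (hcmp (e y)).1 (hcmp (e y)).2
    calc _ = Cf * (Real.log (ang (lS s (e y))) ^ α / ang (lS s (e y)) ^ q) := by ring
      _ ≤ Cf * (K1 * wt α q (l1 (e y))) := mul_le_mul_of_nonneg_left h4 hCf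
      _ = _ := by ring
  have hgm : ∀ a, ∀ β : Fin d → ℕ, ∑ i, β i < p →
      HasSum (fun z => g a z * ∏ i, bq (β i) (z i)) 0 := by
    intro a β hβ
    apply bq_moments p (g a) (fun z => lS s z) _ R (fun z => z) hR β hβ
    intro j hj js
    rw [← e.hasSum_iff]
    have := hmom j hj a js
    simp_rw [he] at this
    exact this
  have hF : ∀ (k : ℕ) (a : Fin N) (σ : Fin k → Fin d) (z : Fin d → ℤ),
      Function.extend (lS s) (fun z => Fs (g a) k z σ) 0 (lS s z) = Fs (g a) k z σ :=
    fun k a σ z => hinj.extend_apply _ _ _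
  refine ⟨fun k x a σ => Function.extend (lS s) (fun z => Fs (g a) k z σ) 0 x, ?_, ?_, ?_⟩
  · intro z a js
    simp only [he, hF]
    rfl
  · intro k hk z a σ
    simp only [he, lS_sub, hF]
    exact (hdiv _ (g a) (hg a) (hgm a)).2.2 k hk (e z) σ
  · intro k _ hk z
    simp only [he, hF]
    generalize e z = y
    have h3 : 0 < ang (lS s y) := by have := ha2 (lS s y); linarith
    have hl := log_pos_aux (ha2 (lS s y))
    have hexp : -(q : ℝ) + k = -((q - k : ℕ) : ℝ) := by
      rw [Nat.cast_sub (by omega)]; ring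
    rw [hexp, Real.rpow_neg h3.le, Real.rpow_natCast]
    obtain ⟨W, hW⟩ : ∃ W, W = Real.log (ang (lS s y)) ^ α / ang (lS s y) ^ (q - k) := ⟨_, rfl⟩
    have hW0 : 0 ≤ W := by rw [hW]; positivity
    have h4 : wt α (q - k) (l1 y) ≤ K2 k * W := by
      rw [hW]
      exact hcmp2 k _ _ (hl2 y) (ha2 (lS s y)) (hcmp y).2 (hcmp y).1
    have h5 : ∀ a σ, |Fs (g a) k y σ| ≤ (Ck k * K1 * K2 k) * (Cf * W) := by
      intro a σ
      refine (hbd k hk _ (g a) (hg a) (hgm a) y σ).trans ?_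
      have := (hCk k).le
      calc _ ≤ Ck k * (Cf * K1) * (K2 k * W) :=
            mul_le_mul_of_nonneg_left h4 (by positivity)
        _ = _ := by ring
    have h6 : Real.sqrt (∑ a : Fin N, ∑ σ : Fin k → Fin d, (Fs (g a) k y σ) ^ 2) ≤
        CC k * (Cf * W) := by
      rw [← Finset.sum_product']
      refine (sqrt_sum_sq_le _ _).trans ?_
      refine (Finset.sum_le_card_nsmul _ _ ((Ck k * K1 * K2 k) * (Cf * W))
        (fun x _ => h5 x.1 x.2)).trans_eq ?_
      rw [Finset.card_product, Finset.card_univ, Finset.card_univ, Fintype.card_fin]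
      simp only [CC, nsmul_eq_mul]
      push_cast
      ring
    refine h6.trans ?_
    have h7 : CC k ≤ ∑ k ∈ Finset.range (p + 1), CC k :=
      Finset.single_le_sum (fun k _ => hCC k) (Finset.mem_range.2 (by omega))
    calc _ ≤ (∑ k ∈ Finset.range (p + 1), CC k) * (Cf * W) :=
          mul_le_mul_of_nonneg_right h7 (by positivity)
      _ = _ := by rw [hW]; ring

end Defect
end
end

section
/- (Green's function representation of finite differences.) Suppose the lattice operator H is stable and admits a lattice Green's function 𝒢. Let u ∈ 𝓗¹ and suppose there are c > 0 and γ > 1 with |H[u](ℓ)| ≤ c⟨ℓ⟩^{−γ} for all ℓ ∈ Λ. Then for every j ≥ 1, every tuple ρ⃗ ∈ ℛ^j, every ℓ ∈ Λ and every k ∈ {1,…,N}, the series ∑_{z∈Λ} H[u](z) · D_{ρ⃗}𝒢_k(ℓ−z) converges absolutely and equals D_{ρ⃗}u_k(ℓ), where the finite differences of 𝒢_k are taken in its argument. -/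
noncomputable section

open scoped BigOperators
open MeasureTheory Filter Topology

namespace Defect

lemma summable_lat (d : ℕ) (s : ℝ) (hs : (d : ℝ) < s) :
    Summable fun z : Fin d → ℤ => (1 + ‖z‖) ^ (-s) := by
  let b := Pi.basisFun ℝ (Fin d)
  let L : Submodule ℤ (Fin d → ℝ) := Submodule.span ℤ (Set.range b)
  have hfr : Module.finrank ℤ L = d := by
    rw [ZLattice.rank ℝ L]; simp
  have h := ZLattice.summable_norm_rpow L (-s) (by rw [hfr]; linarith)
  have hmem : ∀ z : Fin d → ℤ, (fun i => (z i : ℝ)) ∈ L := by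
    intro z
    have : (fun i => (z i : ℝ)) = ∑ i, z i • b i := by
      ext j
      simp [b, Finset.sum_apply, Pi.single_apply]
    rw [this]
    exact Submodule.sum_mem _ fun i _ => Submodule.smul_mem _ _ (Submodule.subset_span ⟨i, rfl⟩)
  let φ : (Fin d → ℤ) → L := fun z => ⟨_, hmem z⟩
  have hinj : Function.Injective φ := by
    intro x y hxy
    ext i
    have : ((x i : ℤ) : ℝ) = ((y i : ℤ) : ℝ) := congrFun (congrArg Subtype.val hxy) i
    exact_mod_cast this
  have h2 := h.comp_injective hinj
  refine Summable.of_norm_bounded_eventually h2 ?_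
  have hfin : ({0} : Set (Fin d → ℤ)).Finite := Set.finite_singleton _
  rw [Filter.eventually_cofinite]
  refine hfin.subset ?_
  intro z hz
  by_contra hne
  apply hz
  have hz0 : 0 < ‖z‖ := norm_pos_iff.mpr (by simpa using hne)
  have hn : ‖φ z‖ = ‖z‖ := by
    change ‖(fun i => (z i : ℝ))‖ = ‖z‖
    simp only [Pi.norm_def]
    congr 1
  rw [Real.norm_of_nonneg (by positivity)]
  simp only [Function.comp, hn]
  apply Real.rpow_le_rpow_of_nonpos hz0 (by linarith)
  have : (0:ℝ) ≤ d := by positivity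
  linarith

lemma bump_bounds (d : ℕ) : ∃ f : (Fin d → ℝ) → ℝ, ∃ M : ℝ, 0 ≤ M ∧
    (∀ x, |f x| ≤ 1) ∧ (∀ x, ‖x‖ ≤ 1 → f x = 1) ∧ (∀ x, 2 ≤ ‖x‖ → f x = 0) ∧
    (∀ x a, |f (x + a) - f x| ≤ M * ‖a‖) ∧
    (∀ x a b, |f (x + a + b) - f (x + a) - f (x + b) + f x| ≤ M * ‖a‖ * ‖b‖) := by
  let f : ContDiffBump (0 : Fin d → ℝ) := ⟨1, 2, by norm_num, by norm_num⟩
  have hc : HasCompactSupport (f : (Fin d → ℝ) → ℝ) := f.hasCompactSupport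
  have hd : ContDiff ℝ 2 (f : (Fin d → ℝ) → ℝ) := f.contDiff
  obtain ⟨C1, h1⟩ := ContDiff.lipschitzWith_of_hasCompactSupport hc hd (by norm_num)
  have hd' : ContDiff ℝ 1 (fderiv ℝ (f : (Fin d → ℝ) → ℝ)) := hd.fderiv_right (by norm_num)
  obtain ⟨C2, h2⟩ := ContDiff.lipschitzWith_of_hasCompactSupport (hc.fderiv ℝ) hd' (by norm_num)
  have hdiff : Differentiable ℝ (f : (Fin d → ℝ) → ℝ) := hd.differentiable (by norm_num)
  refine ⟨f, C1 + C2, by positivity, ?_, ?_, ?_, ?_, ?_⟩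
  · intro x; rw [abs_of_nonneg f.nonneg]; exact f.le_one
  · intro x hx; exact f.one_of_mem_closedBall (by simpa [f] using hx)
  · intro x hx; exact f.zero_of_le_dist (by simpa [f] using hx)
  · intro x a
    have := h1.dist_le_mul (x + a) x
    rw [Real.dist_eq, dist_eq_norm] at this
    simp only [add_sub_cancel_left] at this
    refine this.trans ?_
    gcongr
    simp
  · intro x a b
    have hg : ∀ y, HasFDerivAt (fun y => f (y + b) - f y)
        (fderiv ℝ (f : (Fin d → ℝ) → ℝ) (y + b) - fderiv ℝ (f : (Fin d → ℝ) → ℝ) y) y := by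
      intro y
      have h3 : HasFDerivAt (fun y => f (y + b)) (fderiv ℝ (f : (Fin d → ℝ) → ℝ) (y + b)) y := by
        rw [hasFDerivAt_comp_add_right]
        exact (hdiff (y + b)).hasFDerivAt
      exact h3.sub (hdiff y).hasFDerivAt
    have := Convex.norm_image_sub_le_of_norm_hasFDerivWithin_le (s := Set.univ)
      (f := fun y => f (y + b) - f y) (C := C2 * ‖b‖) (x := x) (y := x + a)
      (fun y _ => (hg y).hasFDerivWithinAt) (fun y _ => by
        have := h2.dist_le_mul (y + b) y
        rw [dist_eq_norm, dist_eq_norm] at this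
        simpa using this) convex_univ trivial trivial
    simp only [add_sub_cancel_left, Real.norm_eq_abs] at this
    have e : f (x + a + b) - f (x + a) - f (x + b) + f x
      = f (x + a + b) - f (x + a) - (f (x + b) - f x) := by ring
    rw [e]
    refine this.trans ?_
    have : (C2 : ℝ) ≤ C1 + C2 := by simp
    calc (C2:ℝ) * ‖b‖ * ‖a‖ = C2 * ‖a‖ * ‖b‖ := by ring
      _ ≤ _ := by gcongr

/-- cast of integer vectors -/
def toR {d : ℕ} (z : Fin d → ℤ) : Fin d → ℝ := fun i => (z i : ℝ)

lemma norm_toR {d : ℕ} (z : Fin d → ℤ) : ‖toR z‖ = ‖z‖ := by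
  simp only [Pi.norm_def]
  congr 1

lemma toR_add {d : ℕ} (y z : Fin d → ℤ) : toR (y + z) = toR y + toR z := by
  ext i; simp [toR]

/-- The lattice cutoffs. -/
lemma cutoff (d : ℕ) : ∃ η : ℕ → (Fin d → ℤ) → ℝ,
    (∀ n z, |η n z| ≤ 1) ∧ (∀ z, ∀ᶠ n in atTop, η n z = 1) ∧
    (∀ n, (Function.support (η n)).Finite) ∧
    (∀ a : Fin d → ℤ, ∃ K : ℝ, 0 ≤ K ∧ ∀ n z, |η n (z + a) - η n z| ≤ K * (1 + ‖z‖)⁻¹) ∧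
    (∀ a b : Fin d → ℤ, ∃ K : ℝ, 0 ≤ K ∧ ∀ n z,
      |η n (z + a + b) - η n (z + a) - η n (z + b) + η n z| ≤ K * ((1 + ‖z‖)⁻¹) ^ 2) := by
  obtain ⟨f, M, hM, hf1, hfin, hfout, hL, hQ⟩ := bump_bounds d
  have zero_of : ∀ (n : ℕ) (z : Fin d → ℤ), 2 * ((n:ℝ) + 1) ≤ ‖z‖ →
      f (((n:ℝ) + 1)⁻¹ • toR z) = 0 := by
    intro n z h
    apply hfout
    rw [norm_smul, norm_toR, Real.norm_of_nonneg (by positivity)]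
    rw [inv_mul_eq_div, le_div_iff₀ (by positivity)]
    exact h
  -- key: if ‖z‖ < 2(n+1) + m then (n+1)⁻¹ ≤ (3+m) (1+‖z‖)⁻¹
  have key : ∀ (n : ℕ) (z : Fin d → ℤ) (m : ℝ), 0 ≤ m → ‖z‖ ≤ 2 * ((n:ℝ) + 1) + m →
      ((n:ℝ) + 1)⁻¹ ≤ (3 + m) * (1 + ‖z‖)⁻¹ := by
    intro n z m hm h
    have hz := norm_nonneg z
    rw [← div_eq_mul_inv, inv_eq_one_div, div_le_div_iff₀ (by positivity) (by positivity)]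
    have : (0:ℝ) ≤ n := by positivity
    nlinarith [mul_nonneg hm this]
  refine ⟨fun n z => f (((n:ℝ) + 1)⁻¹ • toR z), fun n z => hf1 _, ?_, ?_, ?_, ?_⟩
  · intro z
    obtain ⟨n0, hn0⟩ := exists_nat_ge ‖z‖
    filter_upwards [eventually_ge_atTop n0] with n hn
    apply hfin
    rw [norm_smul, norm_toR, Real.norm_of_nonneg (by positivity)]
    rw [inv_mul_eq_div, div_le_one (by positivity)]
    have : (n0:ℝ) ≤ n := by exact_mod_cast hn
    linarith
  · intro n
    have : (Metric.closedBall (0 : Fin d → ℤ) (2 * ((n:ℝ) + 1))).Finite :=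
      (isCompact_closedBall _ _).finite_of_discrete
    refine this.subset ?_
    intro z hz
    simp only [Metric.mem_closedBall, dist_zero_right]
    by_contra h
    exact hz (zero_of n z (by linarith))
  · intro a
    refine ⟨M * ‖a‖ * (3 + ‖a‖), by positivity, fun n z => ?_⟩
    beta_reduce
    have hz := norm_nonneg z
    by_cases h : ‖z‖ ≤ 2 * ((n:ℝ) + 1) + ‖a‖
    · have := key n z _ (norm_nonneg a) h
      rw [toR_add, smul_add]
      refine (hL _ _).trans ?_
      rw [norm_smul, norm_toR, Real.norm_of_nonneg (by positivity)]
      calc M * (((n:ℝ) + 1)⁻¹ * ‖a‖) ≤ M * (((3 + ‖a‖) * (1 + ‖z‖)⁻¹) * ‖a‖) := by gcongr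
        _ = _ := by ring
    · push Not at h
      have h1 := norm_sub_le (z + a) a
      rw [add_sub_cancel_right] at h1
      have ha := norm_nonneg a
      rw [zero_of n z (by linarith), zero_of n (z + a) (by linarith)]
      simp only [sub_self, abs_zero]
      positivity
  · intro a b
    refine ⟨M * ‖a‖ * ‖b‖ * (3 + (‖a‖ + ‖b‖)) ^ 2, by positivity, fun n z => ?_⟩
    beta_reduce
    have hz := norm_nonneg z
    have ha := norm_nonneg a
    have hb := norm_nonneg b
    by_cases h : ‖z‖ ≤ 2 * ((n:ℝ) + 1) + (‖a‖ + ‖b‖)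
    · have := key n z _ (by positivity) h
      simp only [toR_add, smul_add]
      refine (hQ _ _ _).trans ?_
      simp only [norm_smul, norm_toR, Real.norm_of_nonneg (show (0:ℝ) ≤ ((n:ℝ)+1)⁻¹ by positivity)]
      calc M * (((n:ℝ) + 1)⁻¹ * ‖a‖) * (((n:ℝ) + 1)⁻¹ * ‖b‖)
          ≤ M * (((3 + (‖a‖ + ‖b‖)) * (1 + ‖z‖)⁻¹) * ‖a‖) *
            (((3 + (‖a‖ + ‖b‖)) * (1 + ‖z‖)⁻¹) * ‖b‖) := by gcongr
        _ = _ := by ring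
    · push Not at h
      have h1 := norm_sub_le (z + a) a
      have h2 := norm_sub_le (z + b) b
      have h3 := norm_sub_le (z + a + b) b
      rw [add_sub_cancel_right] at h1 h2 h3
      rw [zero_of n z (by linarith), zero_of n (z + a) (by linarith),
        zero_of n (z + b) (by linarith), zero_of n (z + a + b) (by linarith)]
      simp only [sub_self, abs_zero, add_zero]
      positivity

lemma step_nat {d : ℕ} (g : (Fin d → ℤ) → ℝ) (t : Fin d → ℤ) (ht : t ≠ 0)
    (h : Summable fun z => (g (z + t) - g z) ^ 2) (n : ℕ) (z : Fin d → ℤ) :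
    |g (z + n • t) - g z| ≤ Real.sqrt n * Real.sqrt (∑' z, (g (z + t) - g z) ^ 2) := by
  have h1 : g (z + n • t) - g z = ∑ m ∈ Finset.range n, (g (z + m • t + t) - g (z + m • t)) := by
    have := Finset.sum_range_sub (fun m => g (z + m • t)) n
    simp only [zero_smul, add_zero, succ_nsmul, ← add_assoc] at this
    rw [this]
  have h2 : (g (z + n • t) - g z) ^ 2 ≤ n * ∑' z, (g (z + t) - g z) ^ 2 := by
    rw [h1]
    refine (sq_sum_le_card_mul_sum_sq).trans ?_
    rw [Finset.card_range]
    gcongr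
    have hinj : Function.Injective fun m : ℕ => z + m • t := by
      intro a b hab
      have hab' : a • t = b • t := add_left_cancel hab
      obtain ⟨i, hi⟩ := Function.ne_iff.mp ht
      have := congrFun hab' i
      simp only [Pi.smul_apply, nsmul_eq_mul] at this
      exact_mod_cast mul_right_cancel₀ hi this
    have hs := h.comp_injective hinj
    refine (hs.sum_le_tsum _ fun _ _ => sq_nonneg _).trans ?_
    exact tsum_comp_le_tsum_of_inj h (fun _ => sq_nonneg _) hinj
  rw [← Real.sqrt_mul (by positivity)]
  exact Real.abs_le_sqrt h2

lemma step_int {d : ℕ} (g : (Fin d → ℤ) → ℝ) (t : Fin d → ℤ) (ht : t ≠ 0)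
    (h : Summable fun z => (g (z + t) - g z) ^ 2) (n : ℤ) (z : Fin d → ℤ) :
    |g (z + n • t) - g z| ≤ Real.sqrt |(n : ℝ)| * Real.sqrt (∑' z, (g (z + t) - g z) ^ 2) := by
  obtain ⟨m, rfl | rfl⟩ := n.eq_nat_or_neg
  · have := step_nat g t ht h m z
    simpa using this
  · have := step_nat g t ht h m (z + (-(m:ℤ)) • t)
    rw [abs_sub_comm] at this
    simpa using this

lemma growth {d : ℕ} (g : (Fin d → ℤ) → ℝ)
    (h : ∀ i : Fin d, Summable fun z => (g (z + Pi.single i 1) - g z) ^ 2) :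
    ∃ K : ℝ, 0 ≤ K ∧ ∀ z, |g z - g 0| ≤ K * (1 + ‖z‖) ^ (1 / 2 : ℝ) := by
  let S : Fin d → ℝ := fun i => Real.sqrt (∑' z, (g (z + Pi.single i 1) - g z) ^ 2)
  refine ⟨∑ i, S i, Finset.sum_nonneg fun i _ => Real.sqrt_nonneg _, fun z => ?_⟩
  have key : ∀ s : Finset (Fin d), |g (∑ i ∈ s, z i • Pi.single i (1:ℤ)) - g 0| ≤
      ∑ i ∈ s, S i * (1 + ‖z‖) ^ (1 / 2 : ℝ) := by
    intro s
    induction s using Finset.induction_on with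
    | empty => simp
    | insert a s ha ih =>
      rw [Finset.sum_insert ha, Finset.sum_insert ha, add_comm (z a • _)]
      have h1 := step_int g (Pi.single a 1) (by simp) (h a) (z a)
        (∑ i ∈ s, z i • Pi.single i (1:ℤ))
      have h2 : Real.sqrt |(z a : ℝ)| ≤ (1 + ‖z‖) ^ (1 / 2 : ℝ) := by
        rw [← Real.sqrt_eq_rpow]
        apply Real.sqrt_le_sqrt
        have := norm_le_pi_norm z a
        rw [Int.norm_eq_abs] at this
        linarith
      have h3 := abs_sub_le (g (∑ i ∈ s, z i • Pi.single i (1:ℤ) + z a • Pi.single a 1))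
        (g (∑ i ∈ s, z i • Pi.single i (1:ℤ))) (g 0)
      have h4 : Real.sqrt |(z a : ℝ)| * S a ≤ (1 + ‖z‖) ^ (1 / 2 : ℝ) * S a := by
        gcongr
      have h1' : _ ≤ Real.sqrt |(z a : ℝ)| * S a := h1
      linarith [mul_comm ((1 + ‖z‖) ^ (1 / 2 : ℝ)) (S a)]
  have := key Finset.univ
  rw [← Finset.sum_mul] at this
  convert this using 4
  ext j
  simp [Finset.sum_apply, Pi.single_apply]

/-- differences in all directions are square summable -/
lemma sq_subgroup {d : ℕ} (g : (Fin d → ℤ) → ℝ) : ∃ P : AddSubgroup (Fin d → ℤ),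
    ∀ t, t ∈ P ↔ Summable fun z => (g (z + t) - g z) ^ 2 := by
  refine ⟨⟨⟨⟨{t | Summable fun z => (g (z + t) - g z) ^ 2}, ?_⟩, ?_⟩, ?_⟩, fun t => Iff.rfl⟩
  · intro a b ha hb
    simp only [Set.mem_ofPred_eq] at *
    have hb' := (Equiv.addRight a).summable_iff.mpr hb
    refine Summable.of_nonneg_of_le (fun _ => sq_nonneg _) (fun z => ?_)
      ((ha.add hb').mul_left 2)
    simp only [Function.comp, Equiv.coe_addRight]
    rw [← add_assoc]
    nlinarith [sq_nonneg ((g (z + a + b) - g (z + a)) - (g (z + a) - g z))]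
  · simp [summable_zero]
  · intro a ha
    simp only [Set.mem_ofPred_eq] at *
    change Summable fun z => (g (z + -a) - g z) ^ 2
    have := (Equiv.addRight (-a)).summable_iff.mpr ha
    refine this.congr fun z => ?_
    simp only [Function.comp, Equiv.coe_addRight, neg_add_cancel_right]
    ring

lemma shift_bound {d : ℕ} (p : ℝ) (hp : 0 ≤ p) (z a : Fin d → ℤ) :
    (1 + ‖z + a‖) ^ (-p) ≤ (1 + ‖a‖) ^ p * (1 + ‖z‖) ^ (-p) := by
  have ha := norm_nonneg a
  have hz := norm_nonneg z
  have hza := norm_nonneg (z + a)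
  have h1 := norm_sub_le (z + a) a
  rw [add_sub_cancel_right] at h1
  have h2 : 1 + ‖z‖ ≤ (1 + ‖a‖) * (1 + ‖z + a‖) := by nlinarith
  rw [Real.rpow_neg (by positivity), Real.rpow_neg (by positivity), ← div_eq_mul_inv,
    inv_eq_one_div, div_le_div_iff₀ (by positivity) (by positivity), one_mul,
    ← Real.mul_rpow (by positivity) (by positivity)]
  exact Real.rpow_le_rpow (by positivity) h2 hp

/-- mixed second difference -/
def Q {d : ℕ} (s t : Fin d → ℤ) (f : (Fin d → ℤ) → ℝ) (z : Fin d → ℤ) : ℝ :=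
  f (z - s + t) - f (z - s) - f (z + t) + f z

lemma Q_leib {d : ℕ} (s t : Fin d → ℤ) (η w : (Fin d → ℤ) → ℝ) (z : Fin d → ℤ) :
    Q s t (fun y => η y * w y) z - η z * Q s t w z =
      (η (z + -s) - η z) * (w (z + -s + t) - w (z + -s))
      + (η (z + t) - η z) * (-(w (z + (t - s) + s) - w (z + (t - s))))
      + (η (z + -s + t) - η (z + -s) - η (z + t) + η z) * w (z + (t - s)) := by
  have e1 : z + (t - s) + s = z + t := by abel
  have e2 : z + (t - s) = z - s + t := by abel
  have e3 : z + -s = z - s := by abel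
  rw [e1, e2, e3]
  simp only [Q]
  ring

lemma Q_adj_summable {d : ℕ} (s t : Fin d → ℤ) (f v : (Fin d → ℤ) → ℝ)
    (hv : (Function.support v).Finite) :
    Summable (fun z => Q s t f z * v z) ∧ Summable (fun z => f z * Q t s v z) ∧
    ∑' z, Q s t f z * v z = ∑' z, f z * Q t s v z := by
  have sm : ∀ (h : (Fin d → ℤ) → ℝ) (a : Fin d → ℤ),
      Summable (fun z => h (z + a) * v z) := by
    intro h a
    apply summable_of_hasFiniteSupport
    refine hv.subset ?_
    intro z hz hz'
    exact hz (by simp [hz'])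
  have sm2 : ∀ (a : Fin d → ℤ), Summable (fun z => f z * v (z - a)) := by
    intro a
    have := (Equiv.subRight a).summable_iff.mpr (sm f a)
    simpa [Function.comp_def] using this
  have eq : ∀ (a : Fin d → ℤ), ∑' z, f (z + a) * v z = ∑' z, f z * v (z - a) := by
    intro a
    have := (Equiv.subRight a).tsum_eq (fun z => f (z + a) * v z)
    simpa [Function.comp_def] using this.symm
  have eL : ∀ z, Q s t f z * v z = f (z + (t - s)) * v z - f (z + (-s)) * v z
      - f (z + t) * v z + f (z + 0) * v z := by
    intro z
    have e2 : z + (t - s) = z - s + t := by abel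
    have e3 : z + -s = z - s := by abel
    rw [e2, e3, add_zero, Q]; ring
  have eR : ∀ z, f z * Q t s v z = f z * v (z - (t - s)) - f z * v (z - (-s))
      - f z * v (z - t) + f z * v (z - 0) := by
    intro z
    have e2 : z - (t - s) = z - t + s := by abel
    have e3 : z - -s = z + s := by abel
    rw [e2, e3, sub_zero, Q]; ring
  simp only [eL, eR]
  have A := sm f (t - s)
  have B := sm f (-s)
  have C := sm f t
  have D := sm f 0
  have A' := sm2 (t - s)
  have B' := sm2 (-s)
  have C' := sm2 t
  have D' := sm2 0
  refine ⟨((A.sub B).sub C).add D, ((A'.sub B').sub C').add D', ?_⟩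
  rw [((A.sub B).sub C).tsum_add D, (A.sub B).tsum_sub C, A.tsum_sub B,
    ((A'.sub B').sub C').tsum_add D', (A'.sub B').tsum_sub C', A'.tsum_sub B',
    eq, eq, eq, eq]

/-- The operator on integer coordinates. -/
def Lz {d N : ℕ} {ι : Type} (R : Finset ι) (r : ι → Fin d → ℤ)
    (C : ι → ι → Fin N → Fin N → ℝ) (f : (Fin d → ℤ) → Fin N → ℝ) (z : Fin d → ℤ)
    (i : Fin N) : ℝ :=
  ∑ σ ∈ R, ∑ ρ ∈ R, ∑ j, C σ ρ i j * Q (r σ) (r ρ) (fun y => f y j) z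

lemma Lz_adj {d N : ℕ} {ι : Type} (R : Finset ι) (r : ι → Fin d → ℤ)
    (C : ι → ι → Fin N → Fin N → ℝ) (hC : ∀ σ ρ i j, C σ ρ i j = C ρ σ j i)
    (f v : (Fin d → ℤ) → Fin N → ℝ) (hv : ∀ i, (Function.support (fun z => v z i)).Finite) :
    ∑' z, ∑ i, Lz R r C f z i * v z i = ∑' z, ∑ i, f z i * Lz R r C v z i := by
  have h := fun σ ρ i j => Q_adj_summable (r σ) (r ρ) (fun y => f y j) (fun y => v y i) (hv i)
  have e1 : ∀ z, ∑ i, Lz R r C f z i * v z i =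
      ∑ i, ∑ σ ∈ R, ∑ ρ ∈ R, ∑ j,
        C σ ρ i j * (Q (r σ) (r ρ) (fun y => f y j) z * v z i) := by
    intro z
    simp only [Lz, Finset.sum_mul, mul_assoc]
  have e2 : ∀ z, ∑ i, f z i * Lz R r C v z i =
      ∑ i, ∑ σ ∈ R, ∑ ρ ∈ R, ∑ j,
        C σ ρ i j * (f z j * Q (r ρ) (r σ) (fun y => v y i) z) := by
    intro z
    simp only [Lz, Finset.mul_sum]
    rw [Finset.sum_comm]
    conv_rhs => rw [Finset.sum_comm]
    conv_rhs => enter [2, σ]; rw [Finset.sum_comm]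
    conv_rhs => rw [Finset.sum_comm]
    conv_rhs => enter [2, σ, 2, ρ]; rw [Finset.sum_comm]
    refine Finset.sum_congr rfl fun σ _ => ?_
    rw [Finset.sum_comm]
    refine Finset.sum_congr rfl fun ρ _ => Finset.sum_congr rfl fun i _ =>
      Finset.sum_congr rfl fun j _ => ?_
    rw [hC σ ρ i j]; ring
  simp only [e1, e2]
  have S1 := fun σ ρ i j => (h σ ρ i j).1.mul_left (C σ ρ i j)
  have S2 := fun σ ρ i j => (h σ ρ i j).2.1.mul_left (C σ ρ i j)
  rw [Summable.tsum_finsetSum (fun i _ => summable_sum fun σ _ => summable_sum fun ρ _ =>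
      summable_sum fun j _ => S1 σ ρ i j),
    Summable.tsum_finsetSum (fun i _ => summable_sum fun σ _ => summable_sum fun ρ _ =>
      summable_sum fun j _ => S2 σ ρ i j)]
  refine Finset.sum_congr rfl fun i _ => ?_
  rw [Summable.tsum_finsetSum (fun σ _ => summable_sum fun ρ _ =>
      summable_sum fun j _ => S1 σ ρ i j),
    Summable.tsum_finsetSum (fun σ _ => summable_sum fun ρ _ =>
      summable_sum fun j _ => S2 σ ρ i j)]
  refine Finset.sum_congr rfl fun σ _ => ?_
  rw [Summable.tsum_finsetSum (fun ρ _ => summable_sum fun j _ => S1 σ ρ i j),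
    Summable.tsum_finsetSum (fun ρ _ => summable_sum fun j _ => S2 σ ρ i j)]
  refine Finset.sum_congr rfl fun ρ _ => ?_
  rw [Summable.tsum_finsetSum (fun j _ => S1 σ ρ i j),
    Summable.tsum_finsetSum (fun j _ => S2 σ ρ i j)]
  refine Finset.sum_congr rfl fun j _ => ?_
  rw [tsum_mul_left, tsum_mul_left, (h σ ρ i j).2.2]

lemma comm_bound {d : ℕ} (hd : 1 ≤ d) (η : ℕ → (Fin d → ℤ) → ℝ)
    (h1 : ∀ a : Fin d → ℤ, ∃ K : ℝ, 0 ≤ K ∧ ∀ n z, |η n (z + a) - η n z| ≤ K * (1 + ‖z‖)⁻¹)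
    (h2 : ∀ a b : Fin d → ℤ, ∃ K : ℝ, 0 ≤ K ∧ ∀ n z,
      |η n (z + a + b) - η n (z + a) - η n (z + b) + η n z| ≤ K * ((1 + ‖z‖)⁻¹) ^ 2)
    (s t : Fin d → ℤ) (w : (Fin d → ℤ) → ℝ) (K : ℝ) (hK : 0 ≤ K)
    (hw : ∀ z, |w z| ≤ K * (1 + ‖z‖) ^ (-((d:ℝ) - 1)))
    (hs : ∀ z, |w (z + s) - w z| ≤ K * (1 + ‖z‖) ^ (-(d:ℝ)))
    (ht : ∀ z, |w (z + t) - w z| ≤ K * (1 + ‖z‖) ^ (-(d:ℝ))) :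
    ∃ K' : ℝ, 0 ≤ K' ∧ ∀ n z, |Q s t (fun y => η n y * w y) z - η n z * Q s t w z| ≤
      K' * (1 + ‖z‖) ^ (-((d:ℝ) + 1)) := by
  obtain ⟨K1, hK1, b1⟩ := h1 (-s)
  obtain ⟨K2, hK2, b2⟩ := h1 t
  obtain ⟨K3, hK3, b3⟩ := h2 (-s) t
  have hd0 : (0:ℝ) ≤ d := by positivity
  have hd1 : (0:ℝ) ≤ (d:ℝ) - 1 := by
    have : (1:ℝ) ≤ d := by exact_mod_cast hd
    linarith
  refine ⟨K1 * (K * (1 + ‖-s‖) ^ (d:ℝ)) + K2 * (K * (1 + ‖t - s‖) ^ (d:ℝ))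
    + K3 * (K * (1 + ‖t - s‖) ^ ((d:ℝ) - 1)), by positivity, fun n z => ?_⟩
  rw [Q_leib]
  have hX : 0 < 1 + ‖z‖ := by positivity
  have e1 : (1 + ‖z‖)⁻¹ * (1 + ‖z‖) ^ (-(d:ℝ)) = (1 + ‖z‖) ^ (-((d:ℝ) + 1)) := by
    rw [← Real.rpow_neg_one, ← Real.rpow_add hX]; congr 1; ring
  have e2 : ((1 + ‖z‖)⁻¹) ^ 2 * (1 + ‖z‖) ^ (-((d:ℝ) - 1)) = (1 + ‖z‖) ^ (-((d:ℝ) + 1)) := by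
    rw [← Real.rpow_neg_one, ← Real.rpow_natCast, ← Real.rpow_mul hX.le, ← Real.rpow_add hX]
    congr 1; push_cast; ring
  have A : |(η n (z + -s) - η n z) * (w (z + -s + t) - w (z + -s))| ≤
      (K1 * (1 + ‖z‖)⁻¹) * (K * ((1 + ‖-s‖) ^ (d:ℝ) * (1 + ‖z‖) ^ (-(d:ℝ)))) := by
    rw [abs_mul]
    refine mul_le_mul (b1 n z) ((ht _).trans ?_) (abs_nonneg _) (by positivity)
    exact mul_le_mul_of_nonneg_left (shift_bound _ hd0 _ _) hK
  have B : |(η n (z + t) - η n z) * (-(w (z + (t - s) + s) - w (z + (t - s))))| ≤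
      (K2 * (1 + ‖z‖)⁻¹) * (K * ((1 + ‖t - s‖) ^ (d:ℝ) * (1 + ‖z‖) ^ (-(d:ℝ)))) := by
    rw [abs_mul, abs_neg]
    refine mul_le_mul (b2 n z) ((hs _).trans ?_) (abs_nonneg _) (by positivity)
    exact mul_le_mul_of_nonneg_left (shift_bound _ hd0 _ _) hK
  have D : |(η n (z + -s + t) - η n (z + -s) - η n (z + t) + η n z) * w (z + (t - s))| ≤
      (K3 * ((1 + ‖z‖)⁻¹) ^ 2) *
        (K * ((1 + ‖t - s‖) ^ ((d:ℝ) - 1) * (1 + ‖z‖) ^ (-((d:ℝ) - 1)))) := by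
    rw [abs_mul]
    refine mul_le_mul (b3 n z) ((hw _).trans ?_) (abs_nonneg _) (by positivity)
    exact mul_le_mul_of_nonneg_left (shift_bound _ hd1 _ _) hK
  refine (abs_add_three _ _ _).trans ((add_le_add_three A B D).trans (le_of_eq ?_))
  calc _ = K1 * (K * (1 + ‖-s‖) ^ (d:ℝ)) * ((1 + ‖z‖)⁻¹ * (1 + ‖z‖) ^ (-(d:ℝ)))
        + K2 * (K * (1 + ‖t - s‖) ^ (d:ℝ)) * ((1 + ‖z‖)⁻¹ * (1 + ‖z‖) ^ (-(d:ℝ)))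
        + K3 * (K * (1 + ‖t - s‖) ^ ((d:ℝ) - 1)) *
          (((1 + ‖z‖)⁻¹) ^ 2 * (1 + ‖z‖) ^ (-((d:ℝ) - 1))) := by ring
    _ = _ := by rw [e1, e2]; ring

lemma core {d N : ℕ} (hd : 1 ≤ d) {ι : Type} (R : Finset ι) (r : ι → Fin d → ℤ)
    (C : ι → ι → Fin N → Fin N → ℝ) (hC : ∀ σ ρ i j, C σ ρ i j = C ρ σ j i)
    (f w : (Fin d → ℤ) → Fin N → ℝ) (K γ : ℝ) (hK : 0 ≤ K) (hγ : 1 < γ)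
    (hf : ∀ z i, |f z i| ≤ K * (1 + ‖z‖) ^ (1 / 2 : ℝ))
    (hLf : ∀ z i, |Lz R r C f z i| ≤ K * (1 + ‖z‖) ^ (-γ))
    (hw : ∀ z i, |w z i| ≤ K * (1 + ‖z‖) ^ (-((d:ℝ) - 1)))
    (hdw : ∀ ρ ∈ R, ∀ z i, |w (z + r ρ) i - w z i| ≤ K * (1 + ‖z‖) ^ (-(d:ℝ)))
    (hfin : ∀ i, (Function.support (fun z => Lz R r C w z i)).Finite) :
    HasSum (fun z => ∑ i, Lz R r C f z i * w z i) (∑' z, ∑ i, f z i * Lz R r C w z i) := by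
  obtain ⟨η, hη1, hηlim, hηfin, hηD, hηQ⟩ := cutoff d
  have hX : ∀ z : Fin d → ℤ, 0 < 1 + ‖z‖ := fun z => by positivity
  -- dominating functions
  have dom1 : ∀ z i, |Lz R r C f z i| * |w z i| ≤ K * K * (1 + ‖z‖) ^ (-(γ + ((d:ℝ) - 1))) := by
    intro z i
    have := mul_le_mul (hLf z i) (hw z i) (abs_nonneg _) (by have := hX z; positivity)
    refine this.trans (le_of_eq ?_)
    rw [neg_add, Real.rpow_add (hX z)]; ring
  have sum1 : Summable fun z : Fin d → ℤ =>
      ∑ _i : Fin N, K * K * (1 + ‖z‖) ^ (-(γ + ((d:ℝ) - 1))) :=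
    summable_sum fun i _ => (summable_lat d _ (by linarith)).mul_left _
  have hS : Summable (fun z => ∑ i, Lz R r C f z i * w z i) := by
    refine Summable.of_norm_bounded sum1 fun z => ?_
    refine (norm_sum_le _ _).trans (Finset.sum_le_sum fun i _ => ?_)
    rw [Real.norm_eq_abs, abs_mul]
    exact dom1 z i
  have T1 : Tendsto (fun n => ∑' z, ∑ i, Lz R r C f z i * (η n z * w z i)) atTop
      (𝓝 (∑' z, ∑ i, Lz R r C f z i * w z i)) := by
    refine tendsto_tsum_of_dominated_convergence sum1 (fun z => ?_) (Eventually.of_forall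
      fun n z => ?_)
    · refine tendsto_const_nhds.congr' ?_
      filter_upwards [hηlim z] with n hn
      simp [hn]
    · refine (norm_sum_le _ _).trans (Finset.sum_le_sum fun i _ => ?_)
      rw [Real.norm_eq_abs, abs_mul, abs_mul]
      refine le_trans ?_ (dom1 z i)
      gcongr
      exact mul_le_of_le_one_left (abs_nonneg _) (hη1 n z)
  -- commutator
  have hcomm : ∀ σ ρ : ι, ∀ j, ∃ K' : ℝ, 0 ≤ K' ∧ (σ ∈ R → ρ ∈ R → ∀ n z,
      |Q (r σ) (r ρ) (fun y => η n y * w y j) z - η n z * Q (r σ) (r ρ) (fun y => w y j) z| ≤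
      K' * (1 + ‖z‖) ^ (-((d:ℝ) + 1))) := by
    intro σ ρ j
    by_cases h : σ ∈ R ∧ ρ ∈ R
    · obtain ⟨K', h1, h2⟩ := comm_bound hd η hηD hηQ (r σ) (r ρ) (fun y => w y j) K hK
        (fun z => hw z j) (fun z => hdw σ h.1 z j) (fun z => hdw ρ h.2 z j)
      exact ⟨K', h1, fun _ _ => h2⟩
    · exact ⟨0, le_rfl, fun a b => absurd ⟨a, b⟩ h⟩
  choose K' hK' hK'b using hcomm
  let KE : Fin N → ℝ := fun i => ∑ σ ∈ R, ∑ ρ ∈ R, ∑ j, |C σ ρ i j| * K' σ ρ j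
  have hE : ∀ n z i, |Lz R r C (fun y j => η n y * w y j) z i - η n z * Lz R r C w z i| ≤
      KE i * (1 + ‖z‖) ^ (-((d:ℝ) + 1)) := by
    intro n z i
    have e : Lz R r C (fun y j => η n y * w y j) z i - η n z * Lz R r C w z i =
        ∑ σ ∈ R, ∑ ρ ∈ R, ∑ j, C σ ρ i j * (Q (r σ) (r ρ) (fun y => η n y * w y j) z
          - η n z * Q (r σ) (r ρ) (fun y => w y j) z) := by
      simp only [Lz, Finset.mul_sum, ← Finset.sum_sub_distrib]
      refine Finset.sum_congr rfl fun σ _ => Finset.sum_congr rfl fun ρ _ =>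
        Finset.sum_congr rfl fun j _ => ?_
      ring
    rw [e]
    simp only [KE, Finset.sum_mul]
    refine (Finset.abs_sum_le_sum_abs _ _).trans (Finset.sum_le_sum fun σ hσ => ?_)
    refine (Finset.abs_sum_le_sum_abs _ _).trans (Finset.sum_le_sum fun ρ hρ => ?_)
    refine (Finset.abs_sum_le_sum_abs _ _).trans (Finset.sum_le_sum fun j _ => ?_)
    rw [abs_mul, mul_assoc]
    exact mul_le_mul_of_nonneg_left (hK'b σ ρ j hσ hρ n z) (abs_nonneg _)
  have sum2 : Summable fun z : Fin d → ℤ => ∑ i : Fin N,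
      (|f z i * Lz R r C w z i| + K * KE i * (1 + ‖z‖) ^ (-((d:ℝ) + 1 / 2))) := by
    refine summable_sum fun i _ => Summable.add ?_
      ((summable_lat d _ (by linarith)).mul_left _)
    apply summable_of_hasFiniteSupport
    refine (hfin i).subset ?_
    intro z hz hz'
    exact hz (by simp only at hz'; simp [hz'])
  have T2 : Tendsto (fun n => ∑' z, ∑ i, f z i * Lz R r C (fun y j => η n y * w y j) z i) atTop
      (𝓝 (∑' z, ∑ i, f z i * Lz R r C w z i)) := by
    refine tendsto_tsum_of_dominated_convergence sum2 (fun z => ?_) (Eventually.of_forall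
      fun n z => ?_)
    · refine tendsto_finsetSum _ fun i _ => Tendsto.const_mul _ ?_
      refine tendsto_finsetSum _ fun σ _ => tendsto_finsetSum _ fun ρ _ =>
        tendsto_finsetSum _ fun j _ => Tendsto.const_mul _ ?_
      have hl : ∀ y, Tendsto (fun n => η n y * w y j) atTop (𝓝 (w y j)) := by
        intro y
        refine tendsto_const_nhds.congr' ?_
        filter_upwards [hηlim y] with n hn
        simp [hn]
      exact (((hl _).sub (hl _)).sub (hl _)).add (hl _)
    · refine (norm_sum_le _ _).trans (Finset.sum_le_sum fun i _ => ?_)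
      rw [Real.norm_eq_abs, abs_mul, abs_mul]
      have h1 : |Lz R r C (fun y j => η n y * w y j) z i| ≤
          |Lz R r C w z i| + KE i * (1 + ‖z‖) ^ (-((d:ℝ) + 1)) := by
        have a := hE n z i
        have b := abs_sub_abs_le_abs_sub (Lz R r C (fun y j => η n y * w y j) z i)
          (η n z * Lz R r C w z i)
        have c : |η n z * Lz R r C w z i| ≤ |Lz R r C w z i| := by
          rw [abs_mul]; exact mul_le_of_le_one_left (abs_nonneg _) (hη1 n z)
        linarith
      have hKE : 0 ≤ KE i * (1 + ‖z‖) ^ (-((d:ℝ) + 1)) := (abs_nonneg _).trans (hE n z i)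
      have h2 := mul_le_mul_of_nonneg_left h1 (abs_nonneg (f z i))
      have h3 := mul_le_mul_of_nonneg_right (hf z i) hKE
      have e : K * (1 + ‖z‖) ^ (1 / 2 : ℝ) * (KE i * (1 + ‖z‖) ^ (-((d:ℝ) + 1))) =
          K * KE i * (1 + ‖z‖) ^ (-((d:ℝ) + 1 / 2)) := by
        have : (-((d:ℝ) + 1 / 2)) = 1 / 2 + (-((d:ℝ) + 1)) := by ring
        rw [this, Real.rpow_add (hX z)]; ring
      rw [e] at h3
      linarith
  have heq : ∀ n, ∑' z, ∑ i, Lz R r C f z i * (η n z * w z i) =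
      ∑' z, ∑ i, f z i * Lz R r C (fun y j => η n y * w y j) z i := by
    intro n
    refine Lz_adj R r C hC f (fun y j => η n y * w y j) fun i => ?_
    refine (hηfin n).subset ?_
    intro z hz hz'
    exact hz (by simp [hz'])
  have := tendsto_nhds_unique T1 (by simpa only [heq] using T2)
  rw [← this]
  exact hS.hasSum

/-! ### Transfer to integer coordinates -/

lemma latticePt_add (d : ℕ) (A : Matrix (Fin d) (Fin d) ℝ) (y z : Fin d → ℤ) :
    latticePt d A (y + z) = latticePt d A y + latticePt d A z := by
  ext i; simp [latticePt, mul_add, Finset.sum_add_distrib]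

lemma latticePt_neg (d : ℕ) (A : Matrix (Fin d) (Fin d) ℝ) (z : Fin d → ℤ) :
    latticePt d A (-z) = - latticePt d A z := by
  ext i; simp [latticePt]

lemma latticePt_sub (d : ℕ) (A : Matrix (Fin d) (Fin d) ℝ) (y z : Fin d → ℤ) :
    latticePt d A (y - z) = latticePt d A y - latticePt d A z := by
  rw [sub_eq_add_neg, latticePt_add, latticePt_neg, sub_eq_add_neg]

lemma ang_lower (d : ℕ) (A : Matrix (Fin d) (Fin d) ℝ) (hA : IsUnit A.det) :
    ∃ κ : ℝ, 0 < κ ∧ ∀ z : Fin d → ℤ, κ * (1 + ‖z‖) ≤ ang (latticePt d A z) := by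
  let M : ℝ := ∑ i, ∑ j, |A⁻¹ i j|
  have hM : 0 ≤ M := Finset.sum_nonneg fun i _ => Finset.sum_nonneg fun j _ => abs_nonneg _
  refine ⟨(M + 1)⁻¹, by positivity, fun z => ?_⟩
  have he : 0 ≤ enorm (latticePt d A z) := Real.sqrt_nonneg _
  have h1 : ‖z‖ ≤ M * enorm (latticePt d A z) := by
    rw [pi_norm_le_iff_of_nonneg (by positivity)]
    intro i
    have e : toR z = A⁻¹.mulVec (latticePt d A z) := by
      have : latticePt d A z = A.mulVec (toR z) := by
        ext i; simp [latticePt, Matrix.mulVec, dotProduct, toR]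
      rw [this, Matrix.mulVec_mulVec, Matrix.nonsing_inv_mul _ hA, Matrix.one_mulVec]
    have ei : (z i : ℝ) = ∑ j, A⁻¹ i j * latticePt d A z j := congrFun e i
    rw [Int.norm_eq_abs, ei]
    refine (Finset.abs_sum_le_sum_abs _ _).trans ?_
    calc ∑ j, |A⁻¹ i j * latticePt d A z j| ≤ ∑ j, |A⁻¹ i j| * enorm (latticePt d A z) := by
          refine Finset.sum_le_sum fun j _ => ?_
          rw [abs_mul]
          exact mul_le_mul_of_nonneg_left (abs_le_enorm _ j) (abs_nonneg _)
      _ = (∑ j, |A⁻¹ i j|) * enorm (latticePt d A z) := by rw [Finset.sum_mul]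
      _ ≤ _ := by
          refine mul_le_mul_of_nonneg_right ?_ he
          exact Finset.single_le_sum (f := fun i => ∑ j, |A⁻¹ i j|)
            (fun i _ => Finset.sum_nonneg fun j _ => abs_nonneg _) (Finset.mem_univ i)
  rw [inv_mul_le_iff₀ (by positivity)]
  unfold ang
  nlinarith

lemma latticePt_inj (d : ℕ) (A : Matrix (Fin d) (Fin d) ℝ) (hA : IsUnit A.det) :
    Function.Injective (latticePt d A) := by
  intro y z h
  have hm : ∀ z : Fin d → ℤ, latticePt d A z = A.mulVec (toR z) := by
    intro z; ext i; simp [latticePt, Matrix.mulVec, dotProduct, toR]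
  have h2 := congrArg (A⁻¹.mulVec) h
  rw [hm, hm, Matrix.mulVec_mulVec, Matrix.mulVec_mulVec, Matrix.nonsing_inv_mul _ hA,
    Matrix.one_mulVec, Matrix.one_mulVec] at h2
  ext i
  have : (y i : ℝ) = z i := congrFun h2 i
  exact_mod_cast this

lemma ang_rpow {d : ℕ} {A : Matrix (Fin d) (Fin d) ℝ} {κ : ℝ} (hκ : 0 < κ)
    (h : ∀ z : Fin d → ℤ, κ * (1 + ‖z‖) ≤ ang (latticePt d A z)) (p : ℝ) (hp : 0 ≤ p)
    (z : Fin d → ℤ) : ang (latticePt d A z) ^ (-p) ≤ κ ^ (-p) * (1 + ‖z‖) ^ (-p) := by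
  rw [← Real.mul_rpow hκ.le (by positivity)]
  exact Real.rpow_le_rpow_of_nonpos (by positivity) (h z) (by linarith)

lemma Hop_eq_Lz {d N : ℕ} (A : Matrix (Fin d) (Fin d) ℝ) (R : Finset (Vec d))
    (C : Vec d → Vec d → Fin N → Fin N → ℝ) (r : Vec d → Fin d → ℤ)
    (hr : ∀ ρ ∈ R, latticePt d A (r ρ) = ρ) (u : Vec d → Vec N) (z : Fin d → ℤ) (i : Fin N) :
    Hop d N R C u (latticePt d A z) i =
      Lz R r C (fun y => u (latticePt d A y)) z i := by
  simp only [Hop, Lz, Finset.sum_apply]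
  refine Finset.sum_congr rfl fun σ hσ => Finset.sum_congr rfl fun ρ hρ => ?_
  simp only [Pi.sub_apply, mulV, D1, Q, latticePt_add, latticePt_sub, hr σ hσ, hr ρ hρ,
    ← Finset.sum_sub_distrib]
  refine Finset.sum_congr rfl fun j _ => ?_
  ring

lemma Lz_sub {d N : ℕ} {ι : Type} (R : Finset ι) (r : ι → Fin d → ℤ)
    (C : ι → ι → Fin N → Fin N → ℝ) (f g : (Fin d → ℤ) → Fin N → ℝ) (z : Fin d → ℤ)
    (i : Fin N) :
    Lz R r C (fun y j => f y j - g y j) z i = Lz R r C f z i - Lz R r C g z i := by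
  simp only [Lz, ← Finset.sum_sub_distrib, Q]
  refine Finset.sum_congr rfl fun σ _ => Finset.sum_congr rfl fun ρ _ =>
    Finset.sum_congr rfl fun j _ => ?_
  ring

lemma Lz_const {d N : ℕ} {ι : Type} (R : Finset ι) (r : ι → Fin d → ℤ)
    (C : ι → ι → Fin N → Fin N → ℝ) (a : Fin N → ℝ) (z : Fin d → ℤ) (i : Fin N) :
    Lz R r C (fun _ => a) z i = 0 := by
  simp [Lz, Q]

lemma Lz_reflect {d N : ℕ} (R : Finset (Vec d)) (r : Vec d → Fin d → ℤ)
    (hRsym : ∀ ρ ∈ R, -ρ ∈ R) (hr : ∀ ρ ∈ R, r (-ρ) = - r ρ)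
    (C : Vec d → Vec d → Fin N → Fin N → ℝ) (hCpt : ∀ σ ρ, C σ ρ = C (-σ) (-ρ))
    (g : (Fin d → ℤ) → Fin N → ℝ) (p z : Fin d → ℤ) (i : Fin N) :
    Lz R r C (fun y => g (p - y)) z i = Lz R r C g (p - z) i := by
  have key : ∀ F : Vec d → ℝ, ∑ ρ ∈ R, F ρ = ∑ ρ ∈ R, F (-ρ) := by
    intro F
    refine Finset.sum_nbij' (fun x => -x) (fun x => -x) hRsym hRsym ?_ ?_ ?_ <;> simp
  simp only [Lz]
  rw [key]
  refine Finset.sum_congr rfl fun σ hσ => ?_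
  rw [key]
  refine Finset.sum_congr rfl fun ρ hρ => Finset.sum_congr rfl fun j _ => ?_
  rw [← hCpt, hr σ hσ, hr ρ hρ]
  simp only [Q]
  have e1 : p - (z - -r σ + -r ρ) = p - z - r σ + r ρ := by abel
  have e2 : p - (z - -r σ) = p - z - r σ := by abel
  have e3 : p - (z + -r ρ) = p - z + r ρ := by abel
  rw [e1, e2, e3]

/-- Partial version of `Dmulti`. -/
def DS {d : ℕ} {M : Type} [AddCommGroup M] [Module ℝ M] {j : ℕ}
    (ρs : Fin j → Vec d) (s : Finset (Fin j)) (u : Vec d → M) (ℓ : Vec d) : M :=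
  ∑ S ∈ s.powerset, ((-1 : ℝ) ^ (s.card - S.card)) • u (ℓ + ∑ i ∈ S, ρs i)

lemma DS_univ {d : ℕ} {M : Type} [AddCommGroup M] [Module ℝ M] {j : ℕ}
    (ρs : Fin j → Vec d) (u : Vec d → M) (ℓ : Vec d) :
    Dmulti ρs u ℓ = DS ρs Finset.univ u ℓ := by
  simp [Dmulti, DS]

lemma DS_insert {d : ℕ} {M : Type} [AddCommGroup M] [Module ℝ M] {j : ℕ}
    (ρs : Fin j → Vec d) (a : Fin j) (s : Finset (Fin j)) (ha : a ∉ s) (u : Vec d → M)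
    (ℓ : Vec d) :
    DS ρs (insert a s) u ℓ = DS ρs s u (ℓ + ρs a) - DS ρs s u ℓ := by
  unfold DS
  rw [Finset.sum_powerset_insert ha, Finset.card_insert_of_notMem ha, add_comm, sub_eq_add_neg,
    ← Finset.sum_neg_distrib]
  congr 1
  · refine Finset.sum_congr rfl fun S hS => ?_
    have hS' := Finset.mem_powerset.mp hS
    have haS : a ∉ S := fun h => ha (hS' h)
    rw [Finset.card_insert_of_notMem haS, Finset.sum_insert haS, Nat.add_sub_add_right, add_assoc]
  · refine Finset.sum_congr rfl fun S hS => ?_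
    have := Finset.card_le_card (Finset.mem_powerset.mp hS)
    rw [Nat.sub_add_comm this, pow_succ, mul_neg_one, neg_smul]

lemma DS_singleton {d : ℕ} {M : Type} [AddCommGroup M] [Module ℝ M] {j : ℕ}
    (ρs : Fin j → Vec d) (a : Fin j) (u : Vec d → M) (ℓ : Vec d) :
    DS ρs {a} u ℓ = D1 (ρs a) u ℓ := by
  have := DS_insert ρs a ∅ (by simp) u ℓ
  simpa [DS, D1] using this

lemma comp_le_DnormJmat {d N : ℕ} (R : Finset (Vec d)) (j : ℕ)
    (G : Vec d → Fin N → Fin N → ℝ) (x : Vec d) (ρs : Fin j → {x // x ∈ R}) (k i : Fin N) :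
    |Dmulti (fun m => (ρs m : Vec d)) (col G k) x i| ≤ DnormJmat R j G x := by
  have hn : ∀ v : Vec N, 0 ≤ enorm v := fun v => Real.sqrt_nonneg _
  refine (abs_le_enorm _ i).trans ?_
  refine (Real.le_sqrt_of_sq_le ?_ : _ ≤ DnormJ R j (col G k) x).trans
    (Real.le_sqrt_of_sq_le ?_)
  · exact Finset.single_le_sum (f := fun ρs : Fin j → {x // x ∈ R} =>
      (enorm (Dmulti (fun i => (ρs i : Vec d)) (col G k) x)) ^ 2) (fun _ _ => sq_nonneg _)
      (Finset.mem_univ ρs)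
  · exact Finset.single_le_sum (f := fun k : Fin N =>
      (DnormJ R j (col G k) x) ^ 2) (fun _ _ => sq_nonneg _) (Finset.mem_univ k)

lemma growth_u {d N : ℕ} (A : Matrix (Fin d) (Fin d) ℝ) (hA : IsUnit A.det)
    (R : Finset (Vec d))
    (hRspan : ∀ x ∈ Lattice d A, ∃ c : Vec d → ℤ, x = ∑ ρ ∈ R, (c ρ : ℝ) • ρ)
    (r : Vec d → Fin d → ℤ) (hr : ∀ ρ ∈ R, latticePt d A (r ρ) = ρ)
    (u : Vec d → Vec N) (hu : InH1 A R u) :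
    ∃ K : ℝ, 0 ≤ K ∧ ∀ z i, |u (latticePt d A z) i - u (latticePt d A 0) i| ≤
      K * (1 + ‖z‖) ^ (1 / 2 : ℝ) := by
  have h : ∀ i, ∃ K : ℝ, 0 ≤ K ∧ ∀ z, |u (latticePt d A z) i - u (latticePt d A 0) i| ≤
      K * (1 + ‖z‖) ^ (1 / 2 : ℝ) := by
    intro i
    refine growth (fun z => u (latticePt d A z) i) fun m => ?_
    obtain ⟨P, hP⟩ := sq_subgroup (fun z => u (latticePt d A z) i)
    rw [← hP]
    obtain ⟨c, hc⟩ := hRspan (latticePt d A (Pi.single m 1)) ⟨_, rfl⟩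
    have e : (Pi.single m 1 : Fin d → ℤ) = ∑ ρ ∈ R, c ρ • r ρ := by
      apply latticePt_inj d A hA
      rw [hc]
      let φ : (Fin d → ℤ) →+ Vec d := ⟨⟨latticePt d A, by ext; simp [latticePt]⟩,
        latticePt_add d A⟩
      change _ = φ _
      rw [map_sum]
      refine Finset.sum_congr rfl fun ρ hρ => ?_
      rw [map_zsmul]
      change _ = c ρ • latticePt d A (r ρ)
      rw [hr ρ hρ]
      exact Int.cast_smul_eq_zsmul ℝ (c ρ) ρ
    rw [e]
    refine AddSubgroup.sum_mem _ fun ρ hρ => AddSubgroup.zsmul_mem _ ?_ _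
    rw [hP]
    refine Summable.of_nonneg_of_le (fun _ => sq_nonneg _) (fun z => ?_) hu
    rw [latticePt_add, hr ρ hρ]
    have h1 : (u (latticePt d A z + ρ) i - u (latticePt d A z) i) ^ 2 ≤
        enorm (D1 ρ u (latticePt d A z)) ^ 2 := by
      rw [← sq_abs]
      exact pow_le_pow_left₀ (abs_nonneg _) (abs_le_enorm (D1 ρ u (latticePt d A z)) i) 2
    exact h1.trans (Finset.single_le_sum (f := fun ρ => enorm (D1 ρ u (latticePt d A z)) ^ 2)
      (fun _ _ => sq_nonneg _) hρ)
  choose K hK hKb using h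
  refine ⟨∑ i, K i, Finset.sum_nonneg fun i _ => hK i, fun z i => (hKb i z).trans ?_⟩
  gcongr
  exact Finset.single_le_sum (f := K) (fun i _ => hK i) (Finset.mem_univ i)

lemma green_base
    (d N : ℕ) (hd : 2 ≤ d)
    (A : Matrix (Fin d) (Fin d) ℝ) (hA : IsUnit A.det)
    (R : Finset (Vec d))
    (hRsym : ∀ ρ ∈ R, -ρ ∈ R)
    (hRspan : ∀ x ∈ Lattice d A, ∃ c : Vec d → ℤ, x = ∑ ρ ∈ R, (c ρ : ℝ) • ρ)
    (r : Vec d → Fin d → ℤ) (hr : ∀ ρ ∈ R, latticePt d A (r ρ) = ρ)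
    (C : Vec d → Vec d → Fin N → Fin N → ℝ)
    (hCsym : ∀ σ ρ i j, C σ ρ i j = C ρ σ j i)
    (hCpt : ∀ σ ρ, C σ ρ = C (-σ) (-ρ))
    (G : Vec d → Fin N → Fin N → ℝ) (hG : IsLatticeGreen d N A R C G)
    (u : Vec d → Vec N) (hu : InH1 A R u)
    (c γ : ℝ) (hc : 0 < c) (hγ : 1 < γ)
    (hbound : ∀ z : Fin d → ℤ,
      enorm (Hop d N R C u (latticePt d A z)) ≤ c * ang (latticePt d A z) ^ (-γ))
    (ρ : Vec d) (hρ : ρ ∈ R) (zl : Fin d → ℤ) (k : Fin N) :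
    HasSum (fun z : Fin d → ℤ => dotV (Hop d N R C u (latticePt d A z))
        (D1 ρ (col G k) (latticePt d A zl - latticePt d A z)))
      (D1 ρ u (latticePt d A zl) k) := by
  obtain ⟨κ, hκ, hang⟩ := ang_lower d A hA
  obtain ⟨K1, hK1, b1⟩ := growth_u A hA R hRspan r hr u hu
  obtain ⟨hG1, hG2⟩ := hG
  obtain ⟨c1, hc1⟩ := hG2 1 le_rfl
  obtain ⟨c2, hc2⟩ := hG2 2 (by norm_num)
  have hinj := latticePt_inj d A hA
  have hd2 : (2:ℝ) ≤ d := by exact_mod_cast hd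
  have hrneg : ∀ ρ ∈ R, r (-ρ) = - r ρ := by
    intro ρ hρ
    apply hinj
    rw [hr _ (hRsym ρ hρ), latticePt_neg, hr ρ hρ]
  let g : (Fin d → ℤ) → Fin N → ℝ := fun y i => G (latticePt d A y) i k
  let f : (Fin d → ℤ) → Fin N → ℝ := fun y i => u (latticePt d A y) i - u (latticePt d A 0) i
  let w : (Fin d → ℤ) → Fin N → ℝ := fun y i => g (zl + r ρ - y) i - g (zl - y) i
  have hw_eq : ∀ z, D1 ρ (col G k) (latticePt d A zl - latticePt d A z) = w z := by
    intro z
    ext i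
    have e : latticePt d A zl - latticePt d A z + ρ = latticePt d A (zl + r ρ - z) := by
      rw [latticePt_sub, latticePt_add, hr ρ hρ]; abel
    simp only [D1, Pi.sub_apply, col, w, g, e, latticePt_sub d A zl z]
  have hLf : ∀ z i, Lz R r C f z i = Hop d N R C u (latticePt d A z) i := by
    intro z i
    rw [Hop_eq_Lz A R C r hr, Lz_sub, Lz_const, sub_zero]
  have hLg : ∀ z i, Lz R r C g z i = if z = 0 then (Pi.single k 1 : Fin N → ℝ) i else 0 := by
    intro z i
    have h1 := Hop_eq_Lz A R C r hr (col G k) z i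
    rw [hG1] at h1
    have h0 : latticePt d A z = 0 ↔ z = 0 := by
      constructor
      · intro h; apply hinj; rw [h]; ext; simp [latticePt]
      · rintro rfl; ext; simp [latticePt]
    have h2 : Lz R r C g z i = Lz R r C (fun y => col G k (latticePt d A y)) z i := rfl
    rw [h2, ← h1]
    by_cases h : z = 0
    · rw [if_pos (h0.mpr h), if_pos h]
    · have : ¬ latticePt d A z = 0 := fun h' => h (h0.mp h')
      simp [h, this]
  have hLw : ∀ z i, Lz R r C w z i =
      (if z = zl + r ρ then (Pi.single k 1 : Fin N → ℝ) i else 0) -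
      (if z = zl then (Pi.single k 1 : Fin N → ℝ) i else 0) := by
    intro z i
    have := Lz_sub R r C (fun y => g (zl + r ρ - y)) (fun y => g (zl - y)) z i
    rw [Lz_reflect R r hRsym hrneg C hCpt, Lz_reflect R r hRsym hrneg C hCpt, hLg, hLg] at this
    simp only [sub_eq_zero, eq_comm (b := z)] at this
    exact this
  have hfin : ∀ i, (Function.support (fun z => Lz R r C w z i)).Finite := by
    intro i
    refine (Set.toFinite {zl + r ρ, zl}).subset ?_
    intro z hz
    by_contra hne
    simp only [Set.mem_insert_iff, Set.mem_singleton_iff, not_or] at hne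
    apply hz
    simp only [hLw, if_neg hne.1, if_neg hne.2, sub_zero]
  have bd : ∀ (cj p : ℝ), 0 ≤ p → ∃ K : ℝ, 0 ≤ K ∧ ∀ z,
      cj * ang (latticePt d A (zl - z)) ^ (-p) ≤ K * (1 + ‖z‖) ^ (-p) := by
    intro cj p hp
    refine ⟨|cj| * (κ ^ (-p) * (1 + ‖-zl‖) ^ p), by positivity, fun z => ?_⟩
    have hpos : 0 ≤ ang (latticePt d A (zl - z)) := by
      unfold ang enorm; positivity
    calc cj * ang (latticePt d A (zl - z)) ^ (-p)
        ≤ |cj| * ang (latticePt d A (zl - z)) ^ (-p) := by gcongr; exact le_abs_self cj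
      _ ≤ |cj| * (κ ^ (-p) * (1 + ‖zl - z‖) ^ (-p)) := by
          gcongr; exact ang_rpow hκ hang p hp _
      _ = |cj| * (κ ^ (-p) * (1 + ‖z + -zl‖) ^ (-p)) := by
          rw [← norm_neg (zl - z)]; congr 6; abel
      _ ≤ |cj| * (κ ^ (-p) * ((1 + ‖-zl‖) ^ p * (1 + ‖z‖) ^ (-p))) := by
          gcongr; exact shift_bound p hp z (-zl)
      _ = _ := by ring
  obtain ⟨K2, hK2, b2⟩ := bd c1 ((d:ℝ) - 1) (by linarith)
  obtain ⟨K3, hK3, b3⟩ := bd c2 (d:ℝ) (by linarith)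
  have B2 : ∀ z i, |w z i| ≤ K2 * (1 + ‖z‖) ^ (-((d:ℝ) - 1)) := by
    intro z i
    refine le_trans ?_ (b2 z)
    have h1 := comp_le_DnormJmat R 1 G (latticePt d A (zl - z)) (fun _ => ⟨ρ, hρ⟩) k i
    rw [DS_univ, Finset.univ_unique, DS_singleton, latticePt_sub, hw_eq, ← latticePt_sub] at h1
    refine h1.trans ((hc1 _).trans (le_of_eq ?_))
    congr 2; push_cast; ring
  have B3 : ∀ σ ∈ R, ∀ z i, |w (z + r σ) i - w z i| ≤ K3 * (1 + ‖z‖) ^ (-(d:ℝ)) := by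
    intro σ hσ z i
    refine le_trans ?_ (b3 z)
    have h1 := comp_le_DnormJmat R 2 G (latticePt d A (zl - z))
      ![⟨-σ, hRsym σ hσ⟩, ⟨ρ, hρ⟩] k i
    have e : (Finset.univ : Finset (Fin 2)) = insert 0 {1} := by decide
    rw [DS_univ, e, DS_insert _ _ _ (by decide), DS_singleton, DS_singleton] at h1
    simp only [Matrix.cons_val_zero, Matrix.cons_val_one] at h1
    have e2 : latticePt d A (zl - z) + -σ = latticePt d A zl - latticePt d A (z + r σ) := by
      rw [latticePt_sub, latticePt_add, hr σ hσ]; abel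
    rw [e2, hw_eq, latticePt_sub, hw_eq, ← latticePt_sub] at h1
    refine h1.trans ((hc2 _).trans (le_of_eq ?_))
    congr 2; push_cast; ring
  have B4 : ∀ z i, |Lz R r C f z i| ≤ c * κ ^ (-γ) * (1 + ‖z‖) ^ (-γ) := by
    intro z i
    rw [hLf]
    refine (abs_le_enorm _ i).trans ((hbound z).trans ?_)
    rw [mul_assoc]
    gcongr
    exact ang_rpow hκ hang γ (by linarith) z
  have hK4 : 0 ≤ c * κ ^ (-γ) := by positivity
  have main := core (by omega : 1 ≤ d) R r C hCsym f w (K1 + K2 + K3 + c * κ ^ (-γ)) γ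
    (by positivity) hγ
    (fun z i => (b1 z i).trans (by gcongr; linarith))
    (fun z i => (B4 z i).trans (by gcongr; linarith))
    (fun z i => (B2 z i).trans (by gcongr; linarith))
    (fun σ hσ z i => (B3 σ hσ z i).trans (by gcongr; linarith)) hfin
  have hval : ∑' z, ∑ i, f z i * Lz R r C w z i = D1 ρ u (latticePt d A zl) k := by
    have e : ∀ z, ∑ i, f z i * Lz R r C w z i =
        (if z = zl + r ρ then f (zl + r ρ) k else 0) - (if z = zl then f zl k else 0) := by
      intro z
      have hone : ∀ a : Fin d → ℤ, ∑ i, f z i *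
          (if z = a then (Pi.single k 1 : Fin N → ℝ) i else 0) =
          if z = a then f a k else 0 := by
        intro a
        by_cases h : z = a
        · subst h
          simp [Pi.single_apply]
        · simp [h]
      simp only [hLw, mul_sub, Finset.sum_sub_distrib, hone]
    simp only [e]
    rw [((hasSum_ite_eq (zl + r ρ) (f (zl + r ρ) k)).sub (hasSum_ite_eq zl (f zl k))).tsum_eq]
    simp only [f, D1, Pi.sub_apply, latticePt_add, hr ρ hρ]
    ring
  rw [hval] at main
  refine main.congr_fun ?_
  intro z
  rw [hw_eq]
  simp only [dotV, hLf]

/-- Lemma: Green's function representation of finite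
differences. -/
theorem green_representation
    (d N : ℕ) (hd : 2 ≤ d)
    (A : Matrix (Fin d) (Fin d) ℝ) (hA : IsUnit A.det)
    (R : Finset (Vec d)) (hR0 : (0 : Vec d) ∉ R)
    (hRlat : ∀ ρ ∈ R, ρ ∈ Lattice d A)
    (hRsym : ∀ ρ ∈ R, -ρ ∈ R)
    (hRspan : ∀ x ∈ Lattice d A, ∃ c : Vec d → ℤ, x = ∑ ρ ∈ R, (c ρ : ℝ) • ρ)
    (C : Vec d → Vec d → Fin N → Fin N → ℝ)
    (hCsym : ∀ σ ρ i j, C σ ρ i j = C ρ σ j i)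
    (hCpt : ∀ σ ρ, C σ ρ = C (-σ) (-ρ))
    (hstab : IsStable d N A R C)
    (G : Vec d → Fin N → Fin N → ℝ) (hG : IsLatticeGreen d N A R C G)
    (u : Vec d → Vec N) (hu : InH1 A R u)
    (c γ : ℝ) (hc : 0 < c) (hγ : 1 < γ)
    (hbound : ∀ z : Fin d → ℤ,
      enorm (Hop d N R C u (latticePt d A z)) ≤ c * ang (latticePt d A z) ^ (-γ)) :
    ∀ (j : ℕ), 1 ≤ j → ∀ (ρs : Fin j → {x // x ∈ R}) (zl : Fin d → ℤ) (k : Fin N),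
      HasSum
        (fun z : Fin d → ℤ =>
          dotV (Hop d N R C u (latticePt d A z))
            (Dmulti (fun m => (ρs m : Vec d)) (col G k)
              (latticePt d A zl - latticePt d A z)))
        (Dmulti (fun m => (ρs m : Vec d)) u (latticePt d A zl) k) := by
  intro j hj ρs zl k
  choose! r hr using hRlat
  have key : ∀ s : Finset (Fin j), s.Nonempty → ∀ zl : Fin d → ℤ,
      HasSum (fun z : Fin d → ℤ => dotV (Hop d N R C u (latticePt d A z))
        (DS (fun m => (ρs m : Vec d)) s (col G k) (latticePt d A zl - latticePt d A z)))
      (DS (fun m => (ρs m : Vec d)) s u (latticePt d A zl) k) := by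
    intro s hs
    induction hs using Finset.Nonempty.cons_induction with
    | singleton a =>
      intro zl
      simp only [DS_singleton]
      exact green_base d N hd A hA R hRsym hRspan r hr C hCsym hCpt G hG u hu c γ hc hγ hbound
        _ (ρs a).2 zl k
    | cons a s ha hs ih =>
      intro zl
      have h1 := (ih (zl + r (ρs a))).sub (ih zl)
      simp only [Finset.cons_eq_insert, DS_insert _ a s ha, Pi.sub_apply]
      rw [latticePt_add, hr _ (ρs a).2] at h1
      refine h1.congr_fun ?_
      intro z
      have e : latticePt d A zl - latticePt d A z + (ρs a : Vec d) =
          latticePt d A zl + (ρs a : Vec d) - latticePt d A z := by abel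
      rw [e]
      simp only [dotV, Pi.sub_apply, mul_sub, Finset.sum_sub_distrib]
  have : (Finset.univ : Finset (Fin j)).Nonempty := ⟨⟨0, by omega⟩, Finset.mem_univ _⟩
  simp only [DS_univ]
  exact key _ this zl

end Defect
end
end
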